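/- Let A_k be a sequence of measurable subsets of ℝⁿ (n ≥ 2) with Lebesgue measure m(A_k) → ∞. Then μ({Λ ∈ X_n : Λ ∩ A_k = ∅}) → 0 as k → ∞, where μ is Haar probability measure on X_n = SL(n,ℝ)/SL(n,ℤ). -/

import Mathlib

open MeasureTheory Filter Matrix Real ENNReal

noncomputable section

/-- `SL(n, ℝ)`. -/
abbrev SLR (n : ℕ) := Matrix.SpecialLinearGroup (Fin n) ℝ

instance (n : ℕ) : TopologicalSpace (SLR n) :=
  TopologicalSpace.induced (fun g => (g : Matrix (Fin n) (Fin n) ℝ)) inferInstance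

/-- The image of `SL(n, ℤ)` in `SL(n, ℝ)`. -/
def latticeGamma (n : ℕ) : Subgroup (SLR n) :=
  (Matrix.SpecialLinearGroup.map (n := Fin n) (Int.castRingHom ℝ)).range

/-- The space of unimodular lattices `X_n = SL(n,ℝ)/SL(n,ℤ)`. -/
abbrev LatticeSpace (n : ℕ) := SLR n ⧸ latticeGamma n

instance (n : ℕ) : MeasurableSpace (LatticeSpace n) := borel _

/-- The real vector `g · m` of the lattice `g ℤⁿ` coming from the integer vector `m`. -/
def vecOf (n : ℕ) (g : SLR n) (m : Fin n → ℤ) : Fin n → ℝ :=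
  (g : Matrix (Fin n) (Fin n) ℝ).mulVec (fun i => (m i : ℝ))

/-- Euclidean norm on `Fin n → ℝ`. -/
def eNorm {n : ℕ} (v : Fin n → ℝ) : ℝ := ‖(WithLp.equiv 2 (Fin n → ℝ)).symm v‖

/-- The lattice `Λ` contains a nonzero vector lying in `A`. -/
def Intersects (n : ℕ) (Λ : LatticeSpace n) (A : Set (Fin n → ℝ)) : Prop :=
  ∀ g : SLR n, (QuotientGroup.mk g : LatticeSpace n) = Λ →
    ∃ m : Fin n → ℤ, m ≠ 0 ∧ vecOf n g m ∈ A

/-- `α₁(Λ) = sup_{0 ≠ v ∈ Λ} 1/‖v‖` (Euclidean norm). -/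
def alpha1 (n : ℕ) (Λ : LatticeSpace n) : ℝ :=
  sSup {r : ℝ | ∃ g : SLR n, (QuotientGroup.mk g : LatticeSpace n) = Λ ∧
    ∃ m : Fin n → ℤ, m ≠ 0 ∧ r = 1 / eNorm (vecOf n g m)}

/-!
Approximating `A_k` from inside by compact sets reduces the theorem to a bound
`μ {Λ | Λ ∩ C = ∅} ≤ 4 ζ(n) / m(C)` for compact `C ∌ 0`, and hence to bounding the probability that
`P(Λ)`, the sum of a bump function `f` over the primitive vectors of `Λ`, vanishes in terms of the
mean value `a = ∫ f / ζ(n)`. By Möbius inversion `P(Λ)` is asymptotically `a Tⁿ` when `f` is dilated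
by `T`.

* For `n ≥ 3`, average over the index-`p` Hecke points of a fixed lattice: a dilated primitive
  vector survives in about a fraction `1 / p` of them, and two independent ones in about `1 / p²`,
  so that by Chebyshev's inequality for this counting problem the fraction of Hecke points on which
  `P` vanishes is at most about `1 / a`. Averaging preserves `μ`, by invariance.
* For `n = 2`, Hecke averages give Siegel's formula `∫ P = a`. The pair correlations
  `∫ ∑ f(t v) f(w)` over linearly independent primitive `v`, `w` have a known sum over dilations
  `t`, and invariance under `diag(t, t⁻¹)` together with the harmonic series bounds each of them;
  the resulting second moment bound `∫ P² ≤ a² + 4 a` gives the result by Chebyshev's inequality.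
-/

open scoped NNReal

/-! ### Invariant measures on the quotient by a discrete subgroup -/

lemma exists_measurableSet_bijOn {X Y : Type*} [TopologicalSpace X] [SecondCountableTopology X]
    [MeasurableSpace X] [OpensMeasurableSpace X] [TopologicalSpace Y] [MeasurableSpace Y]
    [BorelSpace Y] {f : X → Y} (hf : IsLocalHomeomorph f) (hs : f.Surjective) :
    ∃ F : Set X, MeasurableSet F ∧ Set.BijOn f F Set.univ := by
  rcases isEmpty_or_nonempty X with hX | hX
  · exact ⟨∅, .empty, Set.mapsTo_empty _ _, Set.injOn_empty _, fun y _ => isEmptyElim (hs y).choose⟩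
  choose B hBo hmem hinj using hf.isLocallyInjective
  obtain ⟨s, hsc, hsU⟩ := TopologicalSpace.countable_cover_nhds fun x => (hBo x).mem_nhds (hmem x)
  have hne : s.Nonempty := by
    rw [Set.nonempty_iff_ne_empty]
    rintro rfl
    exact Set.empty_ne_univ (by simpa using hsU)
  obtain ⟨x, rfl⟩ := hsc.exists_eq_range hne
  set D : ℕ → Set Y := disjointed fun i => f '' B (x i)
  have hDB (i : ℕ) : D i ⊆ f '' B (x i) := disjointed_subset _ i
  have hD (i : ℕ) : MeasurableSet (D i) :=
    .disjointed (fun j => (hf.isOpenMap _ (hBo (x j))).measurableSet) i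
  refine ⟨⋃ i, B (x i) ∩ f ⁻¹' D i,
    .iUnion fun i => (hBo _).measurableSet.inter (hf.continuous.measurable (hD i)),
    Set.mapsTo_univ _ _, ?_, ?_⟩
  · rintro a ha b hb hab
    obtain ⟨i, hai, hDi : f a ∈ D i⟩ := Set.mem_iUnion.1 ha
    obtain ⟨j, hbj, hDj : f b ∈ D j⟩ := Set.mem_iUnion.1 hb
    obtain rfl : i = j := (disjoint_disjointed _).eq <|
      Set.not_disjoint_iff.2 ⟨f a, hDi, hab ▸ hDj⟩
    exact hinj _ hai hbj hab
  · intro y _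
    obtain ⟨a, rfl⟩ := hs y
    obtain ⟨i, hi⟩ : ∃ i, f a ∈ D i := by
      have ha : a ∈ ⋃ z ∈ Set.range x, B z := hsU ▸ Set.mem_univ a
      rw [← Set.mem_iUnion, iUnion_disjointed]
      simp only [Set.mem_range, Set.iUnion_exists, Set.iUnion_iUnion_eq', Set.mem_iUnion] at ha ⊢
      exact ha.imp fun i hi => Set.mem_image_of_mem f hi
    obtain ⟨b, hb, hba⟩ := hDB i hi
    exact ⟨b, Set.mem_iUnion.2 ⟨i, hb, by rwa [Set.mem_preimage, hba]⟩, hba⟩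

section DiscreteQuotient

variable {G : Type*} [Group G] [TopologicalSpace G] [IsTopologicalGroup G] {Γ : Subgroup G}
  [DiscreteTopology Γ]

lemma isLocalHomeomorph_quotientMk : IsLocalHomeomorph (QuotientGroup.mk : G → G ⧸ Γ) :=
  (Γ.isQuotientCoveringMap ⟨inferInstanceAs (DiscreteTopology Γ)⟩).isCoveringMap.isLocalHomeomorph

variable [MeasurableSpace G] [BorelSpace G]

/-- The counting measure on the coset `x`, as a measure on `G`. -/
def cosetMeasure (x : G ⧸ Γ) : Measure G := Measure.count.map fun γ : Γ => x.out * γ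

/-- The lift to `G` of a measure on `G ⧸ Γ`: it gives to `S` the mean number of points of `S`
in a coset. -/
def liftMeasure [MeasurableSpace (G ⧸ Γ)] (μ : Measure (G ⧸ Γ)) : Measure G := μ.bind cosetMeasure

lemma lintegral_cosetMeasure_mk (g : G) {f : G → ℝ≥0∞} (hf : Measurable f) :
    ∫⁻ h, f h ∂cosetMeasure (QuotientGroup.mk g : G ⧸ Γ) = ∑' γ : Γ, f (g * γ) := by
  obtain ⟨δ, hδ⟩ := QuotientGroup.mk_out_eq_mul Γ g
  rw [cosetMeasure, lintegral_map hf (by fun_prop), lintegral_count, hδ,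
    ← (Equiv.mulLeft δ).tsum_eq fun γ : Γ => f (g * γ)]
  simp [mul_assoc]

variable [PolishSpace G] [MeasurableSpace (G ⧸ Γ)] [BorelSpace (G ⧸ Γ)] {μ : Measure (G ⧸ Γ)}

lemma measurable_comp_quotientMk_iff {β : Type*} [MeasurableSpace β] {f : G ⧸ Γ → β} :
    Measurable (f ∘ (QuotientGroup.mk : G → G ⧸ Γ)) ↔ Measurable f :=
  Measurable.measurable_comp_iff_of_surjective QuotientGroup.continuous_mk.measurable
    QuotientGroup.mk_surjective

lemma measurable_cosetMeasure : Measurable (cosetMeasure : G ⧸ Γ → Measure G) := by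
  have : Countable Γ := TopologicalSpace.separableSpace_iff_countable.1 inferInstance
  refine measurable_comp_quotientMk_iff.1 (Measure.measurable_of_measurable_coe _ fun s hs => ?_)
  have h (g : G) : cosetMeasure (QuotientGroup.mk g : G ⧸ Γ) s =
      ∑' γ : Γ, s.indicator 1 (g * γ) := by
    rw [← lintegral_cosetMeasure_mk g (measurable_one.indicator hs), lintegral_indicator_one hs]
  simp only [Function.comp_apply, h]
  exact Measurable.tsum fun γ =>
    (measurable_one.indicator hs).comp (continuous_mul_const (γ : G)).measurable

lemma lintegral_liftMeasure {f : G → ℝ≥0∞} (hf : Measurable f) {F : G ⧸ Γ → ℝ≥0∞}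
    (hF : ∀ g : G, F g = ∑' γ : Γ, f (g * γ)) : ∫⁻ h, f h ∂liftMeasure μ = ∫⁻ x, F x ∂μ := by
  rw [liftMeasure, Measure.lintegral_bind measurable_cosetMeasure.aemeasurable hf.aemeasurable]
  congr 1 with x
  induction x using QuotientGroup.induction_on with
  | H g => rw [hF, lintegral_cosetMeasure_mk g hf]

instance isMulLeftInvariant_liftMeasure [SMulInvariantMeasure G (G ⧸ Γ) μ] :
    (liftMeasure μ).IsMulLeftInvariant := by
  refine ⟨fun h => Measure.ext_of_lintegral _ fun f hf => ?_⟩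
  set F : G ⧸ Γ → ℝ≥0∞ := fun x => ∫⁻ g, f g ∂cosetMeasure x
  have hF : Measurable F := (Measure.measurable_lintegral hf).comp measurable_cosetMeasure
  have hFmk (g : G) : F g = ∑' γ : Γ, f (g * γ) := lintegral_cosetMeasure_mk g hf
  have hFsmul (g : G) : F (h • (g : G ⧸ Γ)) = ∑' γ : Γ, f (h * (g * γ)) := by
    rw [MulAction.Quotient.smul_coe, smul_eq_mul, hFmk]; simp only [mul_assoc]
  rw [lintegral_map hf (measurable_const_mul h), lintegral_liftMeasure hf hFmk,
    ← (measurePreserving_smul h μ).lintegral_comp hF]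
  exact lintegral_liftMeasure (hf.comp (measurable_const_mul h)) hFsmul

lemma liftMeasure_of_injOn {B : Set G} (hB : MeasurableSet B)
    (hinj : B.InjOn (QuotientGroup.mk : G → G ⧸ Γ)) :
    liftMeasure μ B = μ ((QuotientGroup.mk : G → G ⧸ Γ) '' B) := by
  have hπ : Measurable (QuotientGroup.mk : G → G ⧸ Γ) := QuotientGroup.continuous_mk.measurable
  rw [← lintegral_indicator_one hB,
    ← lintegral_indicator_one (hB.image_of_measurable_injOn hπ hinj)]
  refine lintegral_liftMeasure (measurable_one.indicator hB) fun g => ?_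
  by_cases hg : (g : G ⧸ Γ) ∈ (QuotientGroup.mk : G → G ⧸ Γ) '' B
  · obtain ⟨b, hb, hbg⟩ := hg
    obtain ⟨γ, rfl⟩ : ∃ γ : Γ, b = g * γ :=
      ⟨⟨g⁻¹ * b, QuotientGroup.eq.1 hbg.symm⟩, by simp⟩
    rw [tsum_eq_single γ, Set.indicator_of_mem hb, Set.indicator_of_mem]
    · rfl
    · exact ⟨_, hb, hbg⟩
    · intro δ hδ
      refine Set.indicator_of_notMem (fun hδB => hδ ?_) _
      have := hinj hδB hb (by simp)
      simpa using this
  · rw [Set.indicator_of_notMem hg, eq_comm, ENNReal.tsum_eq_zero]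
    exact fun γ => Set.indicator_of_notMem (fun h => hg ⟨_, h, by simp⟩) _

instance isLocallyFiniteMeasure_liftMeasure [IsFiniteMeasure μ] :
    IsLocallyFiniteMeasure (liftMeasure μ) where
  finiteAtNhds g := by
    obtain ⟨B, hBo, hgB, hinj⟩ := (isLocalHomeomorph_quotientMk (Γ := Γ)).isLocallyInjective g
    exact ⟨B, hBo.mem_nhds hgB, by
      rw [liftMeasure_of_injOn hBo.measurableSet hinj]; exact measure_lt_top _ _⟩

lemma exists_measurableSet_forall_liftMeasure_inter (Γ : Subgroup G) [DiscreteTopology Γ]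
    [MeasurableSpace (G ⧸ Γ)] [BorelSpace (G ⧸ Γ)] : ∃ F : Set G, ∀ (μ : Measure (G ⧸ Γ))
      (S : Set (G ⧸ Γ)), MeasurableSet S → liftMeasure μ (F ∩ QuotientGroup.mk ⁻¹' S) = μ S := by
  obtain ⟨F, hF, hbij⟩ := exists_measurableSet_bijOn
    (isLocalHomeomorph_quotientMk (Γ := Γ)) QuotientGroup.mk_surjective
  refine ⟨F, fun μ S hS => ?_⟩
  have hπ : Measurable (QuotientGroup.mk : G → G ⧸ Γ) := QuotientGroup.continuous_mk.measurable
  rw [liftMeasure_of_injOn (hF.inter (hπ hS)) (hbij.injOn.mono Set.inter_subset_left),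
    Set.image_inter_preimage, hbij.image_eq, Set.univ_inter]

variable [LocallyCompactSpace G] [SMulInvariantMeasure G (G ⧸ Γ) μ] [IsProbabilityMeasure μ]

instance isHaarMeasure_liftMeasure : (liftMeasure μ).IsHaarMeasure := by
  obtain ⟨F, hF⟩ := exists_measurableSet_forall_liftMeasure_inter Γ
  have : NeZero (liftMeasure μ) := ⟨fun h0 => by simpa [h0] using hF μ Set.univ .univ⟩
  have : (liftMeasure μ).IsOpenPosMeasure := inferInstance
  exact {}

variable (μ)

theorem eq_of_smulInvariantMeasure (μ' : Measure (G ⧸ Γ)) [SMulInvariantMeasure G (G ⧸ Γ) μ']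
    [IsProbabilityMeasure μ'] : μ' = μ := by
  obtain ⟨F, hF⟩ := exists_measurableSet_forall_liftMeasure_inter Γ
  set c := Measure.haarScalarFactor (liftMeasure μ') (liftMeasure μ)
  have hc : μ' = c • μ := by
    ext S hS
    rw [← hF μ' S hS, Measure.isMulLeftInvariant_eq_smul (liftMeasure μ') (liftMeasure μ),
      Measure.smul_apply, hF μ S hS, Measure.smul_apply]
  have hc1 : c = 1 := by
    have h1 : μ' Set.univ = (c • μ) Set.univ := by rw [← hc]
    rw [Measure.smul_apply, measure_univ, measure_univ, ENNReal.smul_def, smul_eq_mul,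
      mul_one] at h1
    exact_mod_cast h1.symm
  rw [hc, hc1, one_smul]

lemma measurePreserving_mul_right_liftMeasure {b : G} (hb : IsConj b b⁻¹) :
    MeasurePreserving (· * b) (liftMeasure μ) (liftMeasure μ) := by
  refine ⟨measurable_mul_const b, ?_⟩
  have hmod : Measure.modularCharacter b = 1 := by
    have h1 : Measure.modularCharacter b * Measure.modularCharacter b = 1 := by
      nth_rw 1 [isConj_iff_eq.1 (Measure.modularCharacter.map_isConj hb)]
      rw [← map_mul, inv_mul_cancel, map_one]
    exact (pow_eq_one_iff_of_nonneg zero_le two_ne_zero).1 ((sq _).trans h1)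
  have hb1 : Measure.modularCharacterFun b = 1 := hmod
  rw [Measure.map_right_mul_eq_modularCharacterFun_smul, hb1, one_smul]

end DiscreteQuotient

section Hecke

variable {G : Type*} [Group G] {Γ : Subgroup G} {ι : Type*} [Fintype ι] {h : ι → G}
  [MeasurableSpace (G ⧸ Γ)] {μ : Measure (G ⧸ Γ)}

/-- The sum of the point masses at the cosets `x hᵢ Γ`; integrating against it is the Hecke
operator of the family `h`. -/
def heckeMeasure (h : ι → G) (x : G ⧸ Γ) : Measure (G ⧸ Γ) :=
  ∑ i, Measure.dirac (QuotientGroup.mk (x.out * h i))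

variable
  (hΓ : ∀ γ ∈ Γ, ∃ σ : Equiv.Perm ι, ∀ i, (QuotientGroup.mk (γ * h i) : G ⧸ Γ) = h (σ i))
include hΓ

lemma heckeMeasure_mk (g : G) :
    heckeMeasure h (g : G ⧸ Γ) = ∑ i, Measure.dirac (QuotientGroup.mk (g * h i)) := by
  obtain ⟨δ, hδ⟩ := QuotientGroup.mk_out_eq_mul Γ g
  obtain ⟨σ, hσ⟩ := hΓ δ δ.2
  have key (i : ι) : (QuotientGroup.mk (g * δ * h i) : G ⧸ Γ) = QuotientGroup.mk (g * h (σ i)) := by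
    have := congrArg (g • ·) (hσ i)
    simpa [mul_assoc, MulAction.Quotient.smul_coe] using this
  simp only [heckeMeasure, hδ, key]
  exact Equiv.sum_comp σ fun i => Measure.dirac (QuotientGroup.mk (g * h i) : G ⧸ Γ)

lemma lintegral_heckeMeasure_mk {F : G ⧸ Γ → ℝ≥0∞} (hF : Measurable F) (g : G) :
    ∫⁻ y, F y ∂heckeMeasure h (g : G ⧸ Γ) = ∑ i, F (QuotientGroup.mk (g * h i)) := by
  simp [heckeMeasure_mk hΓ, lintegral_finsetSum_measure, lintegral_dirac' _ hF]

variable [TopologicalSpace G] [IsTopologicalGroup G] [DiscreteTopology Γ] [PolishSpace G]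
  [BorelSpace (G ⧸ Γ)]

lemma measurable_heckeMeasure :
    Measurable (heckeMeasure h : G ⧸ Γ → Measure (G ⧸ Γ)) := by
  borelize G
  refine measurable_comp_quotientMk_iff.1 ?_
  simp only [Function.comp_def, heckeMeasure_mk hΓ]
  exact Finset.measurable_fun_sum _ fun i _ => Measure.measurable_dirac.comp
    (QuotientGroup.continuous_mk.measurable.comp (measurable_mul_const (h i)))

variable [SMulInvariantMeasure G (G ⧸ Γ) μ]

lemma smulInvariantMeasure_bind_heckeMeasure :
    SMulInvariantMeasure G (G ⧸ Γ) (μ.bind (heckeMeasure h)) := by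
  borelize G
  have hm := measurable_heckeMeasure hΓ
  refine ⟨fun c s hs => ?_⟩
  have hcs : MeasurableSet ((fun x : G ⧸ Γ => c • x) ⁻¹' s) := measurable_const_smul c hs
  have hequiv (x : G ⧸ Γ) :
      heckeMeasure h x ((fun x : G ⧸ Γ => c • x) ⁻¹' s) = heckeMeasure h (c • x) s := by
    induction x using QuotientGroup.induction_on with
    | H g =>
      simp only [MulAction.Quotient.smul_coe, heckeMeasure_mk hΓ, Measure.coe_finsetSum,
        Finset.sum_apply, Measure.dirac_apply' _ hs, Measure.dirac_apply' _ hcs, smul_eq_mul,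
        mul_assoc]
      rfl
  rw [Measure.bind_apply hcs hm.aemeasurable, Measure.bind_apply hs hm.aemeasurable]
  simp only [hequiv]
  exact (measurePreserving_smul c μ).lintegral_comp (Measure.measurable_coe hs |>.comp hm)

/-- By uniqueness, the invariant measure `μ.bind (heckeMeasure h)` is a multiple of `μ`. -/
theorem lintegral_lintegral_heckeMeasure [LocallyCompactSpace G] [IsProbabilityMeasure μ]
    {F : G ⧸ Γ → ℝ≥0∞} (hF : Measurable F) :
    ∫⁻ x, ∫⁻ y, F y ∂heckeMeasure h x ∂μ = Fintype.card ι * ∫⁻ x, F x ∂μ := by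
  borelize G
  rcases isEmpty_or_nonempty ι with hι | hι
  · simp [heckeMeasure]
  have hm := (measurable_heckeMeasure hΓ).aemeasurable (μ := μ)
  have hc0 : (Fintype.card ι : ℝ≥0∞) ≠ 0 := by simp
  have hctop : (Fintype.card ι : ℝ≥0∞) ≠ ∞ := ENNReal.natCast_ne_top _
  set ν := (Fintype.card ι : ℝ≥0∞)⁻¹ • μ.bind (heckeMeasure h) with hν
  have hνinv : SMulInvariantMeasure G (G ⧸ Γ) ν :=
    have := smulInvariantMeasure_bind_heckeMeasure (μ := μ) hΓ
    inferInstance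
  have hνprob : IsProbabilityMeasure ν := ⟨by
    have huniv : μ.bind (heckeMeasure h) Set.univ = Fintype.card ι := by
      simp [Measure.bind_apply .univ hm, heckeMeasure]
    rw [hν, Measure.smul_apply, huniv, smul_eq_mul, ENNReal.inv_mul_cancel hc0 hctop]⟩
  calc ∫⁻ x, ∫⁻ y, F y ∂heckeMeasure h x ∂μ
      = ∫⁻ x, F x ∂μ.bind (heckeMeasure h) := (Measure.lintegral_bind hm hF.aemeasurable).symm
    _ = Fintype.card ι * ∫⁻ x, F x ∂ν := by
        rw [hν, lintegral_smul_measure, smul_eq_mul, ← mul_assoc,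
          ENNReal.mul_inv_cancel hc0 hctop, one_mul]
    _ = Fintype.card ι * ∫⁻ x, F x ∂μ := by rw [eq_of_smulInvariantMeasure μ ν]

end Hecke

/-! ### Primitive vectors of lattices -/

section Primitive

variable {M N : Type*} [AddCommGroup M] [AddCommGroup N] {L : AddSubgroup M} {v w : M} {k l : ℕ}

/-- The primitive vectors of a group `L` of vectors: those that are not a proper multiple of
another vector of `L`. Allowing `k = 0` excludes the zero vector. -/
def primitiveVectors (L : AddSubgroup M) : Set M :=
  {v | v ∈ L ∧ ∀ (k : ℕ), ∀ w ∈ L, v = k • w → k = 1}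

lemma ne_zero_of_mem_primitiveVectors (hv : v ∈ primitiveVectors L) : v ≠ 0 := by
  rintro rfl
  simpa using hv.2 0 0 L.zero_mem

lemma neg_mem_primitiveVectors (hv : v ∈ primitiveVectors L) : -v ∈ primitiveVectors L :=
  ⟨L.neg_mem hv.1, fun k w hw h => hv.2 k (-w) (L.neg_mem hw) (by rw [smul_neg, ← h, neg_neg])⟩

lemma primitiveVectors_map {f : M →+ N} (hf : Function.Injective f) (L : AddSubgroup M) :
    primitiveVectors (L.map f) = f '' primitiveVectors L := by
  ext v
  constructor
  · rintro ⟨⟨u, hu, rfl⟩, hv⟩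
    exact ⟨u, ⟨hu, fun k w hw h => hv k (f w) ⟨w, hw, rfl⟩ (by rw [h, map_nsmul])⟩, rfl⟩
  · rintro ⟨u, ⟨hu, hu'⟩, rfl⟩
    refine ⟨⟨u, hu, rfl⟩, ?_⟩
    rintro k _ ⟨w, hw, rfl⟩ h
    exact hu' k w hw (hf (by rw [h, map_nsmul]))

lemma eq_one_of_coprime_nsmul_eq (hkl : k.Coprime l) (hv : v ∈ primitiveVectors L) (hw : w ∈ L)
    (h : k • v = l • w) : l = 1 := by
  refine hv.2 l (k.gcdA l • w + k.gcdB l • v)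
    (L.add_mem (L.zsmul_mem hw _) (L.zsmul_mem hv.1 _)) ?_
  have hbezout : (k.gcdA l * k + k.gcdB l * l : ℤ) = 1 := by
    have := Nat.gcd_eq_gcd_ab k l
    rw [hkl.gcd_eq_one] at this
    push_cast at this
    linarith
  calc v = (k.gcdA l * k + k.gcdB l * l : ℤ) • v := by rw [hbezout, one_zsmul]
    _ = k.gcdA l • (k • v) + k.gcdB l • (l • v) := by
      simp only [add_smul, mul_smul, natCast_zsmul]
    _ = l • (k.gcdA l • w + k.gcdB l • v) := by
      rw [h, smul_add, smul_comm (k.gcdA l), smul_comm (k.gcdB l)]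

lemma mem_primitiveVectors_of_le {L' : AddSubgroup M} (hLL' : L' ≤ L)
    (hv : v ∈ primitiveVectors L) (hv' : v ∈ L') : v ∈ primitiveVectors L' :=
  ⟨hv', fun k w hw h => hv.2 k w (hLL' hw) h⟩

lemma exists_eq_prime_nsmul {L' : AddSubgroup M} {p : ℕ} (hp : p.Prime) (hLL' : L' ≤ L)
    (hpL : ∀ w ∈ L, p • w ∈ L') (hv : v ∈ primitiveVectors L') (hvL : v ∉ primitiveVectors L) :
    ∃ w ∈ L, v = p • w := by
  obtain ⟨k, w, hw, rfl, hk⟩ : ∃ k : ℕ, ∃ w ∈ L, v = k • w ∧ k ≠ 1 := by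
    by_contra! h
    exact hvL ⟨hLL' hv.1, h⟩
  obtain ⟨k', rfl⟩ | hpk := em (p ∣ k)
  · exact ⟨k' • w, L.nsmul_mem hw _, mul_smul p k' w⟩
  · have hcop : p.Coprime k := (Nat.Prime.coprime_iff_not_dvd hp).2 hpk
    exact (hk (eq_one_of_coprime_nsmul_eq hcop hv (hpL w hw) (smul_comm p k w))).elim

lemma exists_nsmul_primitiveVectors (hv : v ∈ L) (hv0 : v ≠ 0) {B : ℕ}
    (hB : ∀ k : ℕ, ∀ w ∈ L, v = k • w → k ≤ B) :
    ∃ k : ℕ, k ≠ 0 ∧ ∃ w ∈ primitiveVectors L, v = k • w := by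
  classical
  let P : ℕ → Prop := fun k => ∃ w ∈ L, v = k • w
  have hP1 : P 1 := ⟨v, hv, (one_nsmul v).symm⟩
  have hBP : ∀ {k}, P k → k ≤ B := fun ⟨w, hw, h⟩ => hB _ w hw h
  obtain ⟨w, hw, hvw⟩ : P (Nat.findGreatest P B) := Nat.findGreatest_spec (hBP hP1) hP1
  have hk0 : Nat.findGreatest P B ≠ 0 := by
    intro h
    rw [h, zero_nsmul] at hvw
    exact hv0 hvw
  refine ⟨_, hk0, w, ⟨hw, fun j u hu h => ?_⟩, hvw⟩
  have hPj : P (Nat.findGreatest P B * j) := ⟨u, hu, by rw [hvw, mul_smul, ← h]⟩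
  have hj0 : j ≠ 0 := by
    rintro rfl
    rw [h, zero_nsmul, smul_zero] at hvw
    exact hv0 hvw
  have := Nat.le_findGreatest (hBP hPj) hPj
  have : j ≤ 1 := Nat.le_of_mul_le_mul_left (by simpa using this) (Nat.pos_of_ne_zero hk0)
  lia

variable [IsAddTorsionFree M]

lemma eq_and_eq_of_nsmul_eq_nsmul (hk : k ≠ 0) (hv : v ∈ primitiveVectors L)
    (hw : w ∈ primitiveVectors L) (h : k • v = l • w) : k = l ∧ v = w := by
  obtain ⟨d, k', l', hd, hcop, rfl, rfl⟩ := Nat.exists_coprime' (m := k) (n := l)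
    (Nat.gcd_pos_of_pos_left _ (Nat.pos_of_ne_zero hk))
  have h' : k' • v = l' • w := by
    rw [mul_comm k', mul_comm l', mul_smul, mul_smul] at h
    exact nsmul_right_injective hd.ne' h
  obtain rfl := eq_one_of_coprime_nsmul_eq hcop hv hw.1 h'
  obtain rfl := eq_one_of_coprime_nsmul_eq hcop.symm hw hv.1 h'.symm
  exact ⟨rfl, by simpa using h'⟩

theorem tsum_eq_tsum_pnat_tsum_primitiveVectors
    (hL : ∀ v ∈ L, v ≠ 0 → ∃ B : ℕ, ∀ k : ℕ, ∀ w ∈ L, v = k • w → k ≤ B)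
    {F : M → ℝ≥0∞} (hF : F 0 = 0) :
    ∑' v : L, F v = ∑' k : ℕ+, ∑' v : primitiveVectors L, F ((k : ℕ) • (v : M)) := by
  rw [← ENNReal.tsum_prod]
  let φ : ℕ+ × primitiveVectors L → L := fun q => ⟨(q.1 : ℕ) • (q.2 : M), L.nsmul_mem q.2.2.1 _⟩
  have hφ : Function.Injective φ := by
    rintro ⟨k, v⟩ ⟨l, w⟩ h
    obtain ⟨hkl, hvw⟩ := eq_and_eq_of_nsmul_eq_nsmul k.ne_zero v.2 w.2 (Subtype.ext_iff.1 h)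
    exact Prod.ext (PNat.coe_injective hkl) (Subtype.ext hvw)
  refine (hφ.tsum_eq (f := fun v : L => F v) ?_).symm
  intro v hv
  have hv0 : (v : M) ≠ 0 := fun h => hv ((congrArg F h).trans hF)
  obtain ⟨B, hB⟩ := hL v v.2 hv0
  obtain ⟨k, hk, w, hw, hvw⟩ := exists_nsmul_primitiveVectors v.2 hv0 hB
  exact ⟨(⟨k, Nat.pos_of_ne_zero hk⟩, ⟨w, hw⟩), Subtype.ext hvw.symm⟩

end Primitive

section LatticeVectors

instance (n : ℕ) : IsTopologicalGroup (SLR n) := Matrix.SpecialLinearGroup.topologicalGroup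

lemma isClosedEmbedding_coe_SLR (n : ℕ) : Topology.IsClosedEmbedding
    (fun g : SLR n => (g : Matrix (Fin n) (Fin n) ℝ)) :=
  Matrix.SpecialLinearGroup.isClosedEmbedding_val

instance (n : ℕ) : PolishSpace (SLR n) :=
  have : PolishSpace (Matrix (Fin n) (Fin n) ℝ) :=
    inferInstanceAs (PolishSpace (Fin n → Fin n → ℝ))
  (isClosedEmbedding_coe_SLR n).polishSpace

instance (n : ℕ) : LocallyCompactSpace (SLR n) :=
  have : LocallyCompactSpace (Matrix (Fin n) (Fin n) ℝ) :=
    inferInstanceAs (LocallyCompactSpace (Fin n → Fin n → ℝ))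
  (isClosedEmbedding_coe_SLR n).locallyCompactSpace

instance (n : ℕ) : MeasurableSpace (SLR n) := borel _

instance (n : ℕ) : BorelSpace (SLR n) := ⟨rfl⟩

instance (n : ℕ) : BorelSpace (LatticeSpace n) := ⟨rfl⟩

instance (n : ℕ) : DiscreteTopology (latticeGamma n) := by
  have h := Topology.IsClosedEmbedding.specialLinearGroup_map (n := Fin n)
    (f := Int.castRingHom ℝ) Int.isClosedEmbedding_coe_real
  exact h.isEmbedding.toHomeomorph.symm.isEmbedding.discreteTopology

variable {n : ℕ} {g g' : SLR n} {Λ : LatticeSpace n} {v : Fin n → ℝ}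

/-- `vecOf n g` as a homomorphism. -/
def vecOfHom (g : SLR n) : (Fin n → ℤ) →+ (Fin n → ℝ) where
  toFun := vecOf n g
  map_zero' := by simp [vecOf, ← Pi.zero_def]
  map_add' m m' := by simp [vecOf, ← Pi.add_def, Matrix.mulVec_add]

lemma vecOfHom_apply (g : SLR n) (m : Fin n → ℤ) : vecOfHom g m = vecOf n g m := rfl

lemma vecOfHom_injective (g : SLR n) : Function.Injective (vecOfHom g) := by
  intro m m' h
  have := Matrix.mulVec_injective_of_isUnit (A := (g : Matrix (Fin n) (Fin n) ℝ))
    (by simp [Matrix.isUnit_iff_isUnit_det]) h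
  ext i
  exact_mod_cast congrFun this i

lemma vecOfHom_mul_map (g : SLR n) (γ : Matrix.SpecialLinearGroup (Fin n) ℤ) (m : Fin n → ℤ) :
    vecOfHom (g * γ.map (Int.castRingHom ℝ)) m = vecOfHom g (γ.1 *ᵥ m) := by
  simp only [vecOfHom_apply, vecOf, Matrix.SpecialLinearGroup.coe_mul, ← Matrix.mulVec_mulVec]
  congr 1
  ext i
  simp [Matrix.mulVec, dotProduct]

/-- The vectors of the lattice `Λ`, as a subgroup of `ℝⁿ`. -/
def latticeVectors (Λ : LatticeSpace n) : AddSubgroup (Fin n → ℝ) :=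
  AddSubgroup.map (vecOfHom Λ.out) ⊤

lemma map_vecOfHom_mul_le {γ : SLR n} (hγ : γ ∈ latticeGamma n) :
    AddSubgroup.map (vecOfHom (g * γ)) ⊤ ≤ AddSubgroup.map (vecOfHom g) ⊤ := by
  obtain ⟨γ, rfl⟩ := hγ
  rintro _ ⟨m, -, rfl⟩
  exact ⟨_, trivial, (vecOfHom_mul_map g γ m).symm⟩

lemma latticeVectors_mk (g : SLR n) :
    latticeVectors (QuotientGroup.mk g) = AddSubgroup.map (vecOfHom g) ⊤ := by
  obtain ⟨⟨γ, hγ⟩, h⟩ := QuotientGroup.mk_out_eq_mul (latticeGamma n) g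
  rw [latticeVectors, h]
  refine (map_vecOfHom_mul_le hγ).antisymm ?_
  simpa using map_vecOfHom_mul_le (g := g * γ) (inv_mem hγ)

lemma mem_latticeVectors_mk :
    v ∈ latticeVectors (QuotientGroup.mk g) ↔ ∃ m, vecOfHom g m = v := by
  simp [latticeVectors_mk]

lemma mk_eq_mk_of_latticeVectors_le
    (h : latticeVectors (QuotientGroup.mk g) ≤ latticeVectors (QuotientGroup.mk g')) :
    (QuotientGroup.mk g : LatticeSpace n) = QuotientGroup.mk g' := by
  have hcol : ∀ j, ∃ c, vecOfHom g' c = vecOfHom g (Pi.single j 1) := fun j =>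
    mem_latticeVectors_mk.1 (h (mem_latticeVectors_mk.2 ⟨_, rfl⟩))
  choose c hc using hcol
  let C : Matrix (Fin n) (Fin n) ℤ := Matrix.of fun i j => c j i
  have hgC : g.1 = g'.1 * C.map (Int.castRingHom ℝ) := by
    ext i j
    have := congrFun (hc j) i
    simp only [vecOfHom_apply, vecOf, Matrix.mulVec, dotProduct] at this
    simpa [Matrix.mul_apply, C, Pi.single_apply] using this.symm
  have hdet : C.det = 1 := by
    have := congrArg Matrix.det hgC
    rw [Matrix.det_mul, g.2, g'.2, one_mul, ← RingHom.mapMatrix_apply, ← RingHom.map_det] at this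
    exact Int.cast_injective (α := ℝ) (by simpa using this.symm)
  have hmem : g'⁻¹ * g ∈ latticeGamma n :=
    ⟨⟨C, hdet⟩, by rw [eq_inv_mul_iff_mul_eq]; exact Subtype.ext hgC.symm⟩
  exact (QuotientGroup.eq.2 hmem).symm

lemma intersects_iff {A : Set (Fin n → ℝ)} :
    Intersects n Λ A ↔ ∃ v ∈ latticeVectors Λ, v ≠ 0 ∧ v ∈ A := by
  constructor
  · intro h
    obtain ⟨m, hm, hA⟩ := h Λ.out (QuotientGroup.out_eq' Λ)
    exact ⟨_, ⟨m, trivial, rfl⟩, (map_ne_zero_iff _ (vecOfHom_injective _)).2 hm, hA⟩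
  · rintro ⟨v, hv, hv0, hA⟩ g rfl
    obtain ⟨m, rfl⟩ := mem_latticeVectors_mk.1 hv
    exact ⟨m, (map_ne_zero_iff _ (vecOfHom_injective _)).1 hv0, hA⟩

/-- The sum of `F` over the vectors of `Λ`. -/
def latticeSum (F : (Fin n → ℝ) → ℝ≥0∞) (Λ : LatticeSpace n) : ℝ≥0∞ :=
  ∑' v : latticeVectors Λ, F v

/-- The sum of `F` over the primitive vectors of `Λ`. -/
def primSum (F : (Fin n → ℝ) → ℝ≥0∞) (Λ : LatticeSpace n) : ℝ≥0∞ :=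
  ∑' v : primitiveVectors (latticeVectors Λ), F v

lemma primitiveVectors_latticeVectors_mk (g : SLR n) :
    primitiveVectors (latticeVectors (QuotientGroup.mk g)) =
      vecOfHom g '' primitiveVectors (⊤ : AddSubgroup (Fin n → ℤ)) := by
  rw [latticeVectors_mk, primitiveVectors_map (vecOfHom_injective g)]

lemma primSum_mk (F : (Fin n → ℝ) → ℝ≥0∞) (g : SLR n) :
    primSum F (QuotientGroup.mk g) =
      ∑' m : primitiveVectors (⊤ : AddSubgroup (Fin n → ℤ)), F (vecOfHom g m) := by
  rw [primSum, primitiveVectors_latticeVectors_mk, tsum_image _ (vecOfHom_injective g).injOn]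

lemma continuous_vecOfHom (m : Fin n → ℤ) : Continuous fun g : SLR n => vecOfHom g m :=
  (isClosedEmbedding_coe_SLR n).continuous.matrix_mulVec continuous_const

lemma measurable_primSum {F : (Fin n → ℝ) → ℝ≥0∞} (hF : Measurable F) :
    Measurable (primSum F) := by
  rw [← measurable_comp_quotientMk_iff]
  simp only [Function.comp_def, primSum_mk]
  exact Measurable.tsum fun m => hF.comp (continuous_vecOfHom _).measurable

lemma latticeSum_eq_tsum_primSum {F : (Fin n → ℝ) → ℝ≥0∞} (hF : F 0 = 0) (Λ : LatticeSpace n) :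
    latticeSum F Λ = ∑' k : ℕ+, primSum (fun v => F ((k : ℕ) • v)) Λ := by
  refine tsum_eq_tsum_pnat_tsum_primitiveVectors ?_ hF
  induction Λ using QuotientGroup.induction_on with | H g
  intro v hv hv0
  obtain ⟨m, rfl⟩ := mem_latticeVectors_mk.1 hv
  obtain ⟨i, hi⟩ := Function.ne_iff.1 ((map_ne_zero_iff _ (vecOfHom_injective g)).1 hv0)
  refine ⟨(m i).natAbs, fun k w hw h => ?_⟩
  obtain ⟨m', rfl⟩ := mem_latticeVectors_mk.1 hw
  rw [← map_nsmul] at h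
  have hdvd : (k : ℤ) ∣ m i := ⟨m' i, by
    simpa using congrFun (vecOfHom_injective g h) i⟩
  exact Nat.le_of_dvd (Int.natAbs_pos.2 hi) (Int.natCast_dvd.1 hdvd)

end LatticeVectors

section Cells

variable {n : ℕ}

/-- The columns of `g`, as a basis of `ℝⁿ`. -/
def columnBasis (g : SLR n) : Module.Basis (Fin n) ℝ (Fin n → ℝ) :=
  (Pi.basisFun ℝ (Fin n)).map (Matrix.SpecialLinearGroup.toLin' g)

lemma vecOfHom_single (g : SLR n) (j : Fin n) : vecOfHom g (Pi.single j 1) = g.1.col j := by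
  rw [← Matrix.mulVec_single_one, vecOfHom_apply, vecOf]
  congr 1
  ext i
  simp [Pi.single_apply]

lemma columnBasis_apply (g : SLR n) (j : Fin n) :
    columnBasis g j = vecOfHom g (Pi.single j 1) := by
  rw [vecOfHom_single, ← Matrix.mulVec_single_one, columnBasis, Module.Basis.map_apply,
    Pi.basisFun_apply, Matrix.SpecialLinearGroup.toLin'_apply, Matrix.toLin'_apply]

lemma sum_zsmul_columnBasis (g : SLR n) (m : Fin n → ℤ) :
    ∑ j, m j • columnBasis g j = vecOfHom g m := by
  simp_rw [columnBasis_apply, ← map_zsmul, ← map_sum]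
  congr 1
  ext i
  simp [Pi.single_apply]

lemma latticeVectors_mk_eq_span (g : SLR n) :
    latticeVectors (QuotientGroup.mk g) =
      (Submodule.span ℤ (Set.range (columnBasis g))).toAddSubgroup := by
  ext v
  simp_rw [mem_latticeVectors_mk, Submodule.mem_toAddSubgroup,
    Submodule.mem_span_range_iff_exists_fun, sum_zsmul_columnBasis]

instance (Λ : LatticeSpace n) : DiscreteTopology (latticeVectors Λ) :=
  QuotientGroup.induction_on Λ fun g => by
    rw [latticeVectors_mk_eq_span]
    infer_instance

instance (Λ : LatticeSpace n) : Countable (latticeVectors Λ) :=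
  QuotientGroup.induction_on Λ fun g => by
    rw [latticeVectors_mk]
    exact ((Set.countable_univ (α := Fin n → ℤ)).image (vecOfHom g)).to_subtype

lemma volume_fundamentalDomain_columnBasis (g : SLR n) :
    volume (ZSpan.fundamentalDomain (columnBasis g)) = 1 := by
  have : Matrix.of (columnBasis g) = (g : Matrix (Fin n) (Fin n) ℝ)ᵀ := by
    ext i j
    simp [columnBasis_apply, vecOfHom_single]
  rw [ZSpan.volume_fundamentalDomain, this, Matrix.det_transpose, g.2]
  simp

lemma exists_forall_le_nnnorm (Λ : LatticeSpace n) :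
    ∃ δ : ℝ≥0, 0 < δ ∧ ∀ v ∈ latticeVectors Λ, v ≠ 0 → δ ≤ ‖v‖₊ := by
  obtain ⟨δ, hδ, h⟩ := Metric.exists_ball_inter_eq_singleton_of_mem_discrete
    (isDiscrete_iff_discreteTopology.2 (inferInstanceAs (DiscreteTopology (latticeVectors Λ))))
    (latticeVectors Λ).zero_mem
  refine ⟨⟨δ, hδ.le⟩, hδ, fun v hv hv0 => le_of_not_gt fun hlt => hv0 ?_⟩
  exact h.subset ⟨mem_ball_zero_iff.2 hlt, hv⟩

/-- `Λ` has a fundamental domain of volume `1` inside the ball of radius `D` around `0`. -/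
def HasCell (D : ℝ≥0) (Λ : LatticeSpace n) : Prop :=
  ∃ C : Set (Fin n → ℝ), IsAddFundamentalDomain (latticeVectors Λ) C volume ∧ volume C = 1 ∧
    ∀ x ∈ C, ‖x‖₊ ≤ D

theorem hasCell_mk (g : SLR n) :
    HasCell (∑ j, ‖vecOfHom g (Pi.single j 1)‖₊) (QuotientGroup.mk g) := by
  refine ⟨ZSpan.fundamentalDomain (columnBasis g), ?_, volume_fundamentalDomain_columnBasis g,
    fun x hx => ?_⟩
  · rw [latticeVectors_mk_eq_span]
    exact ZSpan.isAddFundamentalDomain' _ volume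
  · rw [← ZSpan.fract_eq_self.2 hx]
    exact_mod_cast (ZSpan.norm_fract_le _ x).trans_eq (by simp [columnBasis_apply])

lemma exists_hasCell (Λ : LatticeSpace n) : ∃ D, HasCell D Λ :=
  QuotientGroup.induction_on Λ fun g => ⟨_, hasCell_mk g⟩

end Cells

/-! ### Counting lattice points -/

section Bumps

variable {n : ℕ} {K r R D : ℝ≥0} {f : (Fin n → ℝ) → ℝ≥0∞} {Λ : LatticeSpace n}

/-- `f` is `K`-Lipschitz with values in `[0, 1]`, and supported in the shell `r ≤ ‖x‖ ≤ R`. -/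
structure IsBump (K r R : ℝ≥0) (f : (Fin n → ℝ) → ℝ≥0∞) : Prop where
  pos : 0 < r
  le_add_edist : ∀ x y, f x ≤ f y + K * edist x y
  le_one : ∀ x, f x ≤ 1
  le_nnnorm : ∀ {x}, f x ≠ 0 → r ≤ ‖x‖₊
  nnnorm_le : ∀ {x}, f x ≠ 0 → ‖x‖₊ ≤ R

namespace IsBump

lemma measurable (hf : IsBump K r R f) : Measurable f :=
  (continuous_of_le_add_edist K (by simp) hf.le_add_edist).measurable

lemma map_zero (hf : IsBump K r R f) : f 0 = 0 := by
  by_contra h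
  simpa [hf.pos.not_ge] using hf.le_nnnorm h

end IsBump

/-- The error bound, for a `K`-Lipschitz function supported in the ball of radius `R`, in the
comparison of its integral with its sum over a lattice with a cell of size `D`. -/
def cellError (n : ℕ) (K R D : ℝ≥0) : ℝ≥0 := K * D * (2 * (R + D)) ^ n

/-- The pointwise error in the comparison of an integral with a lattice sum. -/
def cellBound (n : ℕ) (K R D : ℝ≥0) : (Fin n → ℝ) → ℝ≥0∞ :=
  (Metric.closedBall 0 (R + D : ℝ)).indicator fun _ => K * D

lemma measurable_cellBound : Measurable (cellBound n K R D) :=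
  measurable_const.indicator Metric.isClosed_closedBall.measurableSet

lemma lintegral_cellBound : ∫⁻ x, cellBound n K R D x = cellError n K R D := by
  rw [cellBound, lintegral_indicator_const Metric.isClosed_closedBall.measurableSet,
    Real.volume_pi_closedBall _ (by positivity), Fintype.card_fin,
    ENNReal.ofReal_eq_coe_nnreal (by positivity), ← ENNReal.coe_mul, ← ENNReal.coe_mul]
  rfl

lemma IsBump.le_add_cellBound (hf : IsBump K r R f) {u v w : Fin n → ℝ} (huv : ‖u - v‖₊ ≤ D)
    (hw : w = u ∨ w = v) : f u ≤ f v + cellBound n K R D w := by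
  by_cases hu : f u = 0
  · simp [hu]
  have huR : ‖u‖ ≤ R := hf.nnnorm_le hu
  have huv' : ‖u - v‖ ≤ D := huv
  have hv : ‖v‖ ≤ ‖u‖ + ‖u - v‖ := by
    simpa [norm_sub_rev] using norm_le_norm_add_norm_sub u v
  have hmem : w ∈ Metric.closedBall (0 : Fin n → ℝ) (R + D) := by
    rw [mem_closedBall_zero_iff]
    rcases hw with rfl | rfl <;> linarith [D.2]
  rw [cellBound, Set.indicator_of_mem hmem]
  refine (hf.le_add_edist u v).trans ?_
  gcongr
  rw [edist_eq_enorm_sub]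
  exact_mod_cast huv

theorem latticeSum_le (hf : IsBump K r R f) (hΛ : HasCell D Λ) :
    latticeSum f Λ ≤ (∫⁻ x, f x) + cellError n K R D := by
  obtain ⟨C, hC, hvol, hD⟩ := hΛ
  have hmeas := hf.measurable.add (measurable_cellBound (n := n) (K := K) (R := R) (D := D))
  calc latticeSum f Λ = ∑' v : latticeVectors Λ, ∫⁻ _ in C, f v := by simp [latticeSum, hvol]
    _ ≤ ∑' v : latticeVectors Λ, ∫⁻ x in C, (f + cellBound n K R D) (v +ᵥ x) := by
      refine ENNReal.tsum_le_tsum fun v => ?_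
      exact setLIntegral_mono (hmeas.comp (measurable_const_vadd v)) fun x hx =>
        hf.le_add_cellBound (u := v) (v := v +ᵥ x)
          (by simpa [AddSubgroup.vadd_def] using hD x hx) (.inr rfl)
    _ = (∫⁻ x, f x) + cellError n K R D := by
      rw [← hC.lintegral_eq_tsum'', ← lintegral_cellBound]
      exact lintegral_add_left hf.measurable _

theorem lintegral_le (hf : IsBump K r R f) (hΛ : HasCell D Λ) :
    ∫⁻ x, f x ≤ latticeSum f Λ + cellError n K R D := by
  obtain ⟨C, hC, hvol, hD⟩ := hΛ
  have hmeas := measurable_cellBound (n := n) (K := K) (R := R) (D := D)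
  calc ∫⁻ x, f x = ∑' v : latticeVectors Λ, ∫⁻ x in C, f (v +ᵥ x) := hC.lintegral_eq_tsum'' f
    _ ≤ ∑' v : latticeVectors Λ, ∫⁻ x in C, (f v + cellBound n K R D (v +ᵥ x)) := by
      refine ENNReal.tsum_le_tsum fun v => ?_
      exact setLIntegral_mono (measurable_const.add (hmeas.comp (measurable_const_vadd v)))
        fun x hx =>
          hf.le_add_cellBound (u := v +ᵥ x) (v := v)
            (by simpa [AddSubgroup.vadd_def] using hD x hx) (.inl rfl)
    _ = latticeSum f Λ + cellError n K R D := by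
      simp_rw [lintegral_add_left measurable_const, ENNReal.tsum_add]
      rw [← hC.lintegral_eq_tsum'', lintegral_cellBound]
      simp [latticeSum, hvol]

end Bumps

section Asymptotics

variable {n : ℕ} {P Q : ℝ≥0 → ℝ} {w : ℕ+ → ℝ} {B c M : ℝ}

lemma abs_moebius_le_one (k : ℕ) : |(ArithmeticFunction.moebius k : ℝ)| ≤ 1 :=
  mod_cast ArithmeticFunction.abs_moebius_le_one

lemma summable_pnat_inv_pow (hn : 2 ≤ n) : Summable fun k : ℕ+ => ((k : ℝ) ^ n)⁻¹ :=
  (Real.summable_nat_pow_inv.2 (by lia)).comp_injective PNat.coe_injective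

lemma norm_mul_comp_div_le (hw : ∀ q, |w q| ≤ 1) (hQ : ∀ T, |Q T| ≤ B * T ^ n) (T : ℝ≥0)
    (q : ℕ+) : ‖w q * Q (T / q)‖ ≤ B * T ^ n * ((q : ℝ) ^ n)⁻¹ := by
  calc ‖w q * Q (T / q)‖ ≤ 1 * (B * (T / q : ℝ≥0) ^ n) := by
        rw [norm_mul]
        exact mul_le_mul (hw q) (hQ _) (norm_nonneg _) zero_le_one
    _ = B * T ^ n * ((q : ℝ) ^ n)⁻¹ := by
        push_cast
        rw [div_pow, one_mul, div_eq_mul_inv, mul_assoc]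

lemma tendsto_tsum_mul_comp_div (hn : 2 ≤ n) (hw : ∀ q, |w q| ≤ 1)
    (hQ : ∀ T, |Q T| ≤ B * T ^ n) (h : Tendsto (fun T => Q T / T ^ n) atTop (nhds c)) :
    Tendsto (fun T : ℝ≥0 => (∑' q : ℕ+, w q * Q (T / q)) / T ^ n) atTop
      (nhds ((∑' q : ℕ+, w q * ((q : ℝ) ^ n)⁻¹) * c)) := by
  simp_rw [← tsum_div_const, ← tsum_mul_right]
  refine tendsto_tsum_of_dominated_convergence
    ((summable_pnat_inv_pow hn).mul_left B) (fun q => ?_) ?_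
  · have hdiv : Tendsto (fun T : ℝ≥0 => T / q) atTop atTop :=
      tendsto_id.atTop_div_const (by positivity)
    refine ((h.comp hdiv).const_mul (w q * ((q : ℝ) ^ n)⁻¹)).congr fun T => ?_
    simp only [Function.comp_apply, NNReal.coe_div, NNReal.coe_natCast, div_pow]
    field_simp
  · filter_upwards [eventually_gt_atTop 0] with T hT q
    have hT' : (0 : ℝ) < T ^ n := by positivity
    rw [norm_div, Real.norm_of_nonneg hT'.le, div_le_iff₀ hT']
    exact (norm_mul_comp_div_le hw hQ T q).trans_eq (by ring)

lemma tsum_divisorsAntidiagonal_moebius (k : ℕ+) :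
    ∑' x : Nat.divisorsAntidiagonal k, (ArithmeticFunction.moebius x.1.1 : ℝ) =
      if k = 1 then 1 else 0 := by
  have h : ∑ d ∈ (k : ℕ).divisors, ArithmeticFunction.moebius d = if k = 1 then 1 else 0 := by
    rw [← ArithmeticFunction.coe_mul_zeta_apply, ArithmeticFunction.moebius_mul_coe_zeta,
      ArithmeticFunction.one_apply]
    simp
  rw [tsum_fintype, Finset.univ_eq_attach, Finset.sum_attach (Nat.divisorsAntidiagonal k)
    fun x => (ArithmeticFunction.moebius x.1 : ℝ), Nat.sum_divisorsAntidiagonal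
    (f := fun d _ => (ArithmeticFunction.moebius d : ℝ))]
  exact_mod_cast h

lemma tsum_moebius_mul_tsum_comp_div (hn : 2 ≤ n) (hP : ∀ T, |P T| ≤ B * T ^ n) (T : ℝ≥0) :
    ∑' q : ℕ+, (ArithmeticFunction.moebius q : ℝ) * ∑' k : ℕ+, P (T / q / k) = P T := by
  let F : ℕ+ × ℕ+ → ℝ := fun x => ArithmeticFunction.moebius x.1 * P (T / x.1 / x.2)
  have hF : Summable F := by
    refine .of_norm_bounded (((summable_pnat_inv_pow hn).mul_of_nonneg
      (summable_pnat_inv_pow hn) (fun _ => by positivity) fun _ => by positivity).mul_left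
      (B * T ^ n)) fun x => ?_
    calc ‖F x‖ ≤ 1 * (B * (T / x.1 / x.2 : ℝ≥0) ^ n) := by
          rw [norm_mul]
          exact mul_le_mul (abs_moebius_le_one x.1) (hP _) (norm_nonneg _) zero_le_one
      _ = B * T ^ n * (((x.1 : ℝ) ^ n)⁻¹ * ((x.2 : ℝ) ^ n)⁻¹) := by
        push_cast
        simp only [div_pow]
        field_simp
  have hfiber : ∀ k : ℕ+, ∑' x : Nat.divisorsAntidiagonal k,
      F (sigmaAntidiagonalEquivProd ⟨k, x⟩) = if k = 1 then P T else 0 := by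
    intro k
    have hterm : ∀ x : Nat.divisorsAntidiagonal k, F (sigmaAntidiagonalEquivProd ⟨k, x⟩) =
        ArithmeticFunction.moebius x.1.1 * P (T / k) := by
      rintro ⟨⟨d, e⟩, hx⟩
      have hde : (d : ℝ≥0) * e = k := by exact_mod_cast (Nat.mem_divisorsAntidiagonal.1 hx).1
      simp [F, sigmaAntidiagonalEquivProd, divisorsAntidiagonalFactors, div_div, hde]
    simp_rw [hterm, tsum_mul_right, tsum_divisorsAntidiagonal_moebius]
    split_ifs with h <;> simp [h]
  calc ∑' q : ℕ+, (ArithmeticFunction.moebius q : ℝ) * ∑' k : ℕ+, P (T / q / k)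
      = ∑' x, F x := by simp_rw [← tsum_mul_left]; exact hF.tsum_prod.symm
    _ = ∑' x, F (sigmaAntidiagonalEquivProd x) := (sigmaAntidiagonalEquivProd.tsum_eq F).symm
    _ = ∑' k : ℕ+, if k = 1 then P T else 0 :=
      (sigmaAntidiagonalEquivProd.summable_iff.2 hF).tsum_sigma.trans (tsum_congr hfiber)
    _ = P T := tsum_ite_eq 1 _

theorem tendsto_div_pow_of_tendsto_tsum (hn : 2 ≤ n) (hP : ∀ T, |P T| ≤ B * T ^ n)
    (h : Tendsto (fun T : ℝ≥0 => (∑' k : ℕ+, P (T / k)) / T ^ n) atTop (nhds M)) :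
    Tendsto (fun T => P T / T ^ n) atTop (nhds (M / ∑' k : ℕ+, ((k : ℝ) ^ n)⁻¹)) := by
  have hone : ∀ q : ℕ+, |(fun _ => 1 : ℕ+ → ℝ) q| ≤ 1 := by simp
  have hsum : ∀ T : ℝ≥0, |∑' k : ℕ+, P (T / k)| ≤ (B * ∑' k : ℕ+, ((k : ℝ) ^ n)⁻¹) * T ^ n := by
    intro T
    rw [mul_right_comm, ← tsum_mul_left, ← Real.norm_eq_abs]
    refine tsum_of_norm_bounded ((summable_pnat_inv_pow hn).mul_left _).hasSum fun k => ?_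
    simpa using norm_mul_comp_div_le hone hP T k
  have hlim := tendsto_tsum_mul_comp_div hn (fun q => abs_moebius_le_one q) hsum h
  simp_rw [tsum_moebius_mul_tsum_comp_div hn hP] at hlim
  have hM := tendsto_nhds_unique h (by simpa using tendsto_tsum_mul_comp_div hn hone hP hlim)
  have hzeta : 0 < ∑' k : ℕ+, ((k : ℝ) ^ n)⁻¹ :=
    (summable_pnat_inv_pow hn).tsum_pos (fun _ => by positivity) 1 (by simp)
  rwa [hM, mul_div_cancel_left₀ _ hzeta.ne']

end Asymptotics

section Dilations

variable {n : ℕ} {K r R D T : ℝ≥0} {f : (Fin n → ℝ) → ℝ≥0∞} {Λ : LatticeSpace n}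

/-- The function `f` spread out by the factor `T`. At `T = 0` it is constant with value `f 0`. -/
def dilate (T : ℝ≥0) (f : (Fin n → ℝ) → ℝ≥0∞) (x : Fin n → ℝ) : ℝ≥0∞ := f ((T : ℝ)⁻¹ • x)

lemma dilate_one (f : (Fin n → ℝ) → ℝ≥0∞) : dilate 1 f = f := by
  ext x
  simp [dilate]

lemma dilate_dilate (S T : ℝ≥0) (f : (Fin n → ℝ) → ℝ≥0∞) :
    dilate S (dilate T f) = dilate (S * T) f := by
  ext x
  simp only [dilate, smul_smul, NNReal.coe_mul, _root_.mul_inv_rev]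

lemma dilate_smul (T : ℝ≥0) (f : (Fin n → ℝ) → ℝ≥0∞) (k : ℕ+) :
    (fun v => dilate T f ((k : ℕ) • v)) = dilate (T / k) f := by
  ext v
  simp only [dilate, ← Nat.cast_smul_eq_nsmul ℝ, smul_smul]
  congr 2
  push_cast
  rw [inv_div, mul_comm, div_eq_mul_inv]

lemma IsBump.dilate (hf : IsBump K r R f) (hT : 0 < T) :
    IsBump (K / T) (T * r) (T * R) (dilate T f) where
  pos := mul_pos hT hf.pos
  le_add_edist x y := by
    refine (hf.le_add_edist ((T : ℝ)⁻¹ • x) ((T : ℝ)⁻¹ • y)).trans_eq ?_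
    rw [edist_smul₀, nnnorm_inv, NNReal.nnnorm_eq, ENNReal.smul_def, smul_eq_mul, ← mul_assoc,
      ← ENNReal.coe_mul, div_eq_mul_inv]
    rfl
  le_one x := hf.le_one _
  le_nnnorm h := by
    have := hf.le_nnnorm h
    rwa [nnnorm_smul, nnnorm_inv, NNReal.nnnorm_eq, le_inv_mul_iff₀ hT] at this
  nnnorm_le h := by
    have := hf.nnnorm_le h
    rwa [nnnorm_smul, nnnorm_inv, NNReal.nnnorm_eq, inv_mul_le_iff₀ hT] at this

lemma lintegral_dilate (hT : 0 < T) (f : (Fin n → ℝ) → ℝ≥0∞) :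
    ∫⁻ x, dilate T f x = T ^ n * ∫⁻ x, f x := by
  have hT' : (T : ℝ)⁻¹ ≠ 0 := by positivity
  calc ∫⁻ x, dilate T f x
      = ∫⁻ x, f x ∂(volume.map ((T : ℝ)⁻¹ • · : (Fin n → ℝ) → Fin n → ℝ)) :=
        (lintegral_map_equiv f (Homeomorph.smulOfNeZero (T : ℝ)⁻¹ hT').toMeasurableEquiv).symm
    _ = T ^ n * ∫⁻ x, f x := by
      rw [Measure.map_addHaar_smul _ hT', lintegral_smul_measure]
      simp [ENNReal.ofReal_pow]

lemma cellError_dilate (hT : 0 < T) :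
    cellError n (K / T) (T * R) D = T ^ n * cellError n K R (D / T) := by
  have : T * R + D = T * (R + D / T) := by field_simp
  rw [cellError, cellError, this, mul_left_comm 2, mul_pow]
  field_simp

lemma latticeSum_dilate_eq_tsum_primSum (hf : f 0 = 0) (T : ℝ≥0) (Λ : LatticeSpace n) :
    latticeSum (dilate T f) Λ = ∑' k : ℕ+, primSum (dilate (T / k) f) Λ := by
  rw [latticeSum_eq_tsum_primSum (by simpa [dilate] using hf)]
  simp_rw [dilate_smul]

lemma primSum_le_latticeSum (f : (Fin n → ℝ) → ℝ≥0∞) (Λ : LatticeSpace n) :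
    primSum f Λ ≤ latticeSum f Λ :=
  ENNReal.tsum_mono_subtype f fun _ hv => hv.1

lemma IsBump.lintegral_lt_top (hf : IsBump K r R f) : ∫⁻ x, f x < ∞ := by
  calc ∫⁻ x, f x ≤ ∫⁻ x, (Metric.closedBall (0 : Fin n → ℝ) R).indicator 1 x := by
        refine lintegral_mono fun x => ?_
        by_cases hx : f x = 0
        · simp [hx]
        · have hxR : ‖x‖ ≤ R := hf.nnnorm_le hx
          rw [Set.indicator_of_mem (mem_closedBall_zero_iff.2 hxR)]
          exact hf.le_one x
    _ = volume (Metric.closedBall (0 : Fin n → ℝ) R) :=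
      lintegral_indicator_one Metric.isClosed_closedBall.measurableSet
    _ < ∞ := Metric.isBounded_closedBall.measure_lt_top

theorem latticeSum_dilate_le (hf : IsBump K r R f) (hΛ : HasCell D Λ) (hT : 0 < T) :
    latticeSum (dilate T f) Λ ≤ T ^ n * ((∫⁻ x, f x) + cellError n K R (D / T)) := by
  have := latticeSum_le (hf.dilate hT) hΛ
  rwa [lintegral_dilate hT, cellError_dilate hT, ENNReal.coe_mul, ENNReal.coe_pow,
    ← mul_add] at this

theorem le_latticeSum_dilate (hf : IsBump K r R f) (hΛ : HasCell D Λ) (hT : 0 < T) :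
    T ^ n * ∫⁻ x, f x ≤ latticeSum (dilate T f) Λ + T ^ n * cellError n K R (D / T) := by
  have := lintegral_le (hf.dilate hT) hΛ
  rwa [lintegral_dilate hT, cellError_dilate hT, ENNReal.coe_mul, ENNReal.coe_pow] at this

theorem exists_forall_latticeSum_dilate_le (hf : IsBump K r R f) (Λ : LatticeSpace n) :
    ∃ C : ℝ≥0, ∀ T : ℝ≥0, latticeSum (dilate T f) Λ ≤ C * T ^ n := by
  obtain ⟨D, hD⟩ := exists_hasCell Λ
  obtain ⟨δ, hδ, hmin⟩ := exists_forall_le_nnnorm Λ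
  refine ⟨(∫⁻ x, f x).toNNReal + cellError n K R (D * R / δ), fun T => ?_⟩
  rw [ENNReal.coe_add, ENNReal.coe_toNNReal hf.lintegral_lt_top.ne]
  by_cases hT : T * R < δ
  · have hzero : ∀ v : latticeVectors Λ, dilate T f v = 0 := by
      intro v
      by_contra h
      have hv0 : (v : Fin n → ℝ) ≠ 0 := by
        intro hv0
        simp [dilate, hv0, hf.map_zero] at h
      have hT0 : 0 < T := by
        rw [pos_iff_ne_zero]
        rintro rfl
        simp [dilate, hf.map_zero] at h
      exact hT.not_ge ((hmin v v.2 hv0).trans ((hf.dilate hT0).nnnorm_le h))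
    simp [latticeSum, hzero]
  · have hT' : 0 < T := by
      by_contra h
      simp_all
    refine (latticeSum_dilate_le hf hD hT').trans ?_
    rw [mul_comm]
    have : D / T ≤ D * R / δ := by
      rw [div_le_div_iff₀ hT' hδ]
      nlinarith [D.2]
    simp only [cellError]
    gcongr

lemma tendsto_cellError_div (n : ℕ) (K R D : ℝ≥0) :
    Tendsto (fun T : ℝ≥0 => (cellError n K R (D / T) : ℝ≥0∞)) atTop (nhds 0) := by
  have hdiv : Tendsto (fun T : ℝ≥0 => D / T) atTop (nhds 0) := by
    rw [← NNReal.tendsto_coe]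
    exact tendsto_const_nhds.div_atTop (NNReal.tendsto_coe_atTop.2 tendsto_id)
  have hcont : Continuous fun D => cellError n K R D := by
    unfold cellError
    fun_prop
  have h0 : cellError n K R 0 = 0 := by simp [cellError]
  rw [← ENNReal.coe_zero, ENNReal.tendsto_coe, ← h0]
  exact (hcont.tendsto 0).comp hdiv

theorem tendsto_latticeSum_dilate (hf : IsBump K r R f) (Λ : LatticeSpace n) :
    Tendsto (fun T : ℝ≥0 => latticeSum (dilate T f) Λ / T ^ n) atTop (nhds (∫⁻ x, f x)) := by
  obtain ⟨D, hD⟩ := exists_hasCell Λ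
  have herr := tendsto_cellError_div n K R D
  refine tendsto_of_tendsto_of_tendsto_of_le_of_le'
    (g := fun T : ℝ≥0 => (∫⁻ x, f x) - cellError n K R (D / T))
    (h := fun T : ℝ≥0 => (∫⁻ x, f x) + cellError n K R (D / T)) ?_ ?_ ?_ ?_
  · simpa only [tsub_zero] using ENNReal.Tendsto.sub tendsto_const_nhds herr (.inr zero_ne_top)
  · simpa only [add_zero] using tendsto_const_nhds.add herr
  · filter_upwards [eventually_gt_atTop 0] with T hT
    have hT0 : (T : ℝ≥0∞) ^ n ≠ 0 := pow_ne_zero _ (ENNReal.coe_ne_zero.2 hT.ne')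
    have hTtop : (T : ℝ≥0∞) ^ n ≠ ∞ := ENNReal.pow_ne_top ENNReal.coe_ne_top
    refine tsub_le_iff_right.2 ((ENNReal.mul_le_mul_iff_right hT0 hTtop).1 ?_)
    rw [mul_add, ENNReal.mul_div_cancel hT0 hTtop]
    exact le_latticeSum_dilate hf hD hT
  · filter_upwards [eventually_gt_atTop 0] with T hT
    exact ENNReal.div_le_of_le_mul' (latticeSum_dilate_le hf hD hT)

/-- The value `ζ(n)` of the zeta function. -/
def zetaSum (n : ℕ) : ℝ≥0∞ := ∑' k : ℕ+, ((k : ℝ≥0∞) ^ n)⁻¹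

lemma zetaSum_ne_zero (n : ℕ) : zetaSum n ≠ 0 := by
  intro h
  simpa using ENNReal.tsum_eq_zero.1 h 1

lemma ofReal_tsum_inv_pow (hn : 2 ≤ n) :
    ENNReal.ofReal (∑' k : ℕ+, ((k : ℝ) ^ n)⁻¹) = zetaSum n := by
  rw [ENNReal.ofReal_tsum_of_nonneg (fun _ => by positivity) (summable_pnat_inv_pow hn), zetaSum]
  refine tsum_congr fun k => ?_
  rw [ENNReal.ofReal_inv_of_pos (by positivity), ENNReal.ofReal_pow (by positivity),
    ENNReal.ofReal_natCast]

lemma zetaSum_ne_top (hn : 2 ≤ n) : zetaSum n ≠ ∞ :=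
  ofReal_tsum_inv_pow hn ▸ ENNReal.ofReal_ne_top

/-- The mean value of `primSum f` according to Siegel's formula. -/
def siegelMean (f : (Fin n → ℝ) → ℝ≥0∞) : ℝ≥0∞ := (∫⁻ x, f x) / zetaSum n

lemma siegelMean_ne_top (hf : IsBump K r R f) : siegelMean f ≠ ∞ :=
  ENNReal.div_ne_top hf.lintegral_lt_top.ne (zetaSum_ne_zero n)

lemma zetaSum_mul_siegelMean (hn : 2 ≤ n) (f : (Fin n → ℝ) → ℝ≥0∞) :
    zetaSum n * siegelMean f = ∫⁻ x, f x :=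
  ENNReal.mul_div_cancel (zetaSum_ne_zero n) (zetaSum_ne_top hn)

theorem tendsto_primSum_dilate (hf : IsBump K r R f) (hn : 2 ≤ n) (Λ : LatticeSpace n) :
    Tendsto (fun T : ℝ≥0 => primSum (dilate T f) Λ / T ^ n) atTop
      (nhds (siegelMean f)) := by
  obtain ⟨C, hC⟩ := exists_forall_latticeSum_dilate_le hf Λ
  have hfin : ∀ T : ℝ≥0, primSum (dilate T f) Λ ≤ C * T ^ n := fun T =>
    (primSum_le_latticeSum _ _).trans (hC T)
  have htop : ∀ T : ℝ≥0, primSum (dilate T f) Λ ≠ ∞ := fun T =>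
    ne_top_of_le_ne_top (by exact_mod_cast ENNReal.coe_ne_top) (hfin T)
  let P : ℝ≥0 → ℝ := fun T => (primSum (dilate T f) Λ).toReal
  have hP : ∀ T, |P T| ≤ C * T ^ n := fun T => by
    rw [abs_of_nonneg ENNReal.toReal_nonneg]
    exact ENNReal.toReal_le_of_le_ofReal (by positivity) (by
      simpa [ENNReal.ofReal_mul, ENNReal.ofReal_pow] using hfin T)
  have hsum : ∀ T : ℝ≥0, (latticeSum (dilate T f) Λ / T ^ n).toReal =
      (∑' k : ℕ+, P (T / k)) / T ^ n := fun T => by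
    rw [latticeSum_dilate_eq_tsum_primSum hf.map_zero, ENNReal.toReal_div,
      ENNReal.tsum_toReal_eq fun _ => htop _]
    simp [P]
  have hlim := tendsto_div_pow_of_tendsto_tsum hn hP
    (((ENNReal.tendsto_toReal hf.lintegral_lt_top.ne).comp
      (tendsto_latticeSum_dilate hf Λ)).congr hsum)
  have hzeta : 0 < ∑' k : ℕ+, ((k : ℝ) ^ n)⁻¹ :=
    (summable_pnat_inv_pow hn).tsum_pos (fun _ => by positivity) 1 (by simp)
  have := ENNReal.tendsto_ofReal hlim
  rw [ENNReal.ofReal_div_of_pos hzeta, ofReal_tsum_inv_pow hn,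
    ENNReal.ofReal_toReal hf.lintegral_lt_top.ne] at this
  refine this.congr' ?_
  filter_upwards [eventually_gt_atTop 0] with T hT
  rw [ENNReal.ofReal_div_of_pos (by positivity), ENNReal.ofReal_toReal (htop T)]
  simp [ENNReal.ofReal_pow]

end Dilations

/-! ### Hecke points -/

section HeckePoints

variable {n p : ℕ} {g : SLR n} {v : Fin n → ℝ} {m : Fin n → ℤ} {i : Fin n}

/-- Reduction of integer vectors modulo `p`. -/
def modVec (n p : ℕ) : (Fin n → ℤ) →+ (Fin n → ZMod p) :=
  (Int.castAddHom (ZMod p)).compLeft (Fin n)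

lemma modVec_mulVec (A : Matrix (Fin n) (Fin n) ℤ) (m : Fin n → ℤ) :
    modVec n p (A *ᵥ m) = A.map (Int.castRingHom (ZMod p)) *ᵥ modVec n p m :=
  funext fun i => RingHom.map_mulVec (Int.castRingHom (ZMod p)) A m i

lemma modVec_eq_zero_iff : modVec n p m = 0 ↔ ∃ w, m = p • w := by
  constructor
  · intro h
    choose w hw using fun i => (ZMod.intCast_zmod_eq_zero_iff_dvd (m i) p).1 (congrFun h i)
    exact ⟨w, funext fun i => by simpa using hw i⟩
  · rintro ⟨w, rfl⟩
    ext i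
    simp [modVec]

/-- The factor by which a lattice of covolume `p` is shrunk to become unimodular. -/
def heckeScale (n p : ℕ) : ℝ≥0 := (p : ℝ≥0) ^ (n : ℝ)⁻¹

lemma heckeScale_pos (n : ℕ) (hp : p ≠ 0) : 0 < heckeScale n p :=
  NNReal.rpow_pos (by positivity)

lemma heckeScale_pow (hn : n ≠ 0) (p : ℕ) : heckeScale n p ^ n = p :=
  NNReal.rpow_inv_natCast_pow _ hn

lemma heckeScale_le_div (hn : 2 ≤ n) (hp : p ≠ 0) : heckeScale n p ≤ p / heckeScale n p := by
  rw [le_div_iff₀ (heckeScale_pos n hp), ← heckeScale_pow (by lia : n ≠ 0) p, ← sq]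
  refine pow_le_pow_right₀ ?_ hn
  exact NNReal.one_le_rpow (by exact_mod_cast Nat.one_le_iff_ne_zero.2 hp) (by positivity)

/-- The parametrization of the lattice `g ℤⁿ`, shrunk by the factor `heckeScale n p`. -/
def heckeHom (p : ℕ) (g : SLR n) : (Fin n → ℤ) →+ (Fin n → ℝ) :=
  (DistribSMul.toAddMonoidHom _ (heckeScale n p : ℝ)⁻¹).comp (vecOfHom g)

lemma heckeHom_apply (p : ℕ) (g : SLR n) (m : Fin n → ℤ) :
    heckeHom p g m = (heckeScale n p : ℝ)⁻¹ • vecOfHom g m := rfl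

lemma heckeHom_injective (hp : p ≠ 0) (g : SLR n) : Function.Injective (heckeHom p g) :=
  fun _ _ h => vecOfHom_injective g (smul_right_injective (Fin n → ℝ)
    (inv_ne_zero (by exact_mod_cast (heckeScale_pos n hp).ne') : (heckeScale n p : ℝ)⁻¹ ≠ 0) h)

lemma heckeHom_mul_map (p : ℕ) (g : SLR n) (γ : Matrix.SpecialLinearGroup (Fin n) ℤ)
    (m : Fin n → ℤ) :
    heckeHom p (g * γ.map (Int.castRingHom ℝ)) m = heckeHom p g (γ.1 *ᵥ m) := by
  rw [heckeHom_apply, heckeHom_apply, vecOfHom_mul_map]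

/-- The integral diagonal matrix with entry `p` at `i` and `1` elsewhere, rescaled to
determinant `1`. -/
def heckeDiagonal (hn : n ≠ 0) (hp : p ≠ 0) (i : Fin n) : SLR n :=
  ⟨(heckeScale n p : ℝ)⁻¹ • Matrix.diagonal (Pi.mulSingle i (p : ℝ)), by
    have hpow : (heckeScale n p : ℝ) ^ n = p := by exact_mod_cast heckeScale_pow hn p
    have hp' : (p : ℝ) ≠ 0 := by exact_mod_cast hp
    simp [hpow, hp']⟩

lemma vecOfHom_mul_heckeDiagonal (hn : n ≠ 0) (hp : p ≠ 0) (g : SLR n) (m : Fin n → ℤ) :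
    vecOfHom (g * heckeDiagonal hn hp i) m =
      heckeHom p g (Pi.mulSingle i (p : ℤ) * m) := by
  have hdiag : Matrix.diagonal (Pi.mulSingle i (p : ℝ)) *ᵥ (fun j => (m j : ℝ)) =
      fun j => ((Pi.mulSingle i (p : ℤ) * m : Fin n → ℤ) j : ℝ) := by
    ext j
    rcases eq_or_ne j i with rfl | hj <;> simp [Matrix.mulVec_diagonal, *]
  rw [vecOfHom_apply, vecOf, Matrix.SpecialLinearGroup.coe_mul, ← Matrix.mulVec_mulVec,
    heckeDiagonal, Matrix.smul_mulVec, hdiag, Matrix.mulVec_smul]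
  rfl

lemma exists_mulSingle_mul_eq_iff :
    (∃ m' : Fin n → ℤ, Pi.mulSingle i (p : ℤ) * m' = m) ↔ (p : ℤ) ∣ m i := by
  constructor
  · rintro ⟨m', rfl⟩
    simp
  · rintro ⟨k, hk⟩
    refine ⟨Function.update m i k, funext fun j => ?_⟩
    rcases eq_or_ne j i with rfl | hj <;> simp [*]

variable [hp : Fact p.Prime] {a : Fin n → ZMod p}

/-- `SL(n, ℤ)` acts transitively on the hyperplanes of `𝔽ₚⁿ`. -/
lemma exists_dotProduct_modVec_eq_zero_iff (ha : a ≠ 0) :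
    ∃ (γ : Matrix.SpecialLinearGroup (Fin n) ℤ) (i : Fin n),
      ∀ m, a ⬝ᵥ modVec n p m = 0 ↔ (p : ℤ) ∣ (γ.1 *ᵥ m) i := by
  obtain ⟨i, hi⟩ := Function.ne_iff.1 ha
  let c : Fin n → ℤ := fun j => if j = i then 1 else ((a i)⁻¹ * a j).val
  have hc : ∀ j, (c j : ZMod p) = (a i)⁻¹ * a j := by
    intro j
    by_cases h : j = i
    · simp [c, h, inv_mul_cancel₀ hi]
    · simp [c, h]
  refine ⟨⟨(1 : Matrix (Fin n) (Fin n) ℤ).updateRow i c, ?_⟩, i, fun m => ?_⟩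
  · rw [← Matrix.cramer_transpose_apply]
    simp [c]
  · have hrow : (((1 : Matrix (Fin n) (Fin n) ℤ).updateRow i c *ᵥ m) i : ZMod p) =
        (a i)⁻¹ * (a ⬝ᵥ modVec n p m) := by
      simp [Matrix.mulVec, dotProduct, hc, Finset.mul_sum, mul_assoc, modVec]
    rw [← ZMod.intCast_zmod_eq_zero_iff_dvd, hrow]
    simp [inv_ne_zero hi]

theorem exists_hecke (hn : n ≠ 0) (a : {a : Fin n → ZMod p // a ≠ 0}) :
    ∃ h : SLR n, ∀ (g : SLR n) (v : Fin n → ℝ),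
      v ∈ latticeVectors (QuotientGroup.mk (g * h)) ↔
        ∃ m, a.1 ⬝ᵥ modVec n p m = 0 ∧ heckeHom p g m = v := by
  obtain ⟨γ, i, hγ⟩ := exists_dotProduct_modVec_eq_zero_iff a.2
  refine ⟨γ⁻¹.map (Int.castRingHom ℝ) * heckeDiagonal hn hp.out.ne_zero i, fun g v => ?_⟩
  simp only [mem_latticeVectors_mk, ← mul_assoc, vecOfHom_mul_heckeDiagonal, heckeHom_mul_map]
  constructor
  · rintro ⟨m, rfl⟩
    refine ⟨_, (hγ _).2 ?_, rfl⟩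
    rw [Matrix.mulVec_mulVec, ← Matrix.SpecialLinearGroup.coe_mul, mul_inv_cancel]
    simp
  · rintro ⟨m, hm, rfl⟩
    obtain ⟨m', hm'⟩ := exists_mulSingle_mul_eq_iff.2 ((hγ m).1 hm)
    refine ⟨m', ?_⟩
    rw [hm', Matrix.mulVec_mulVec, ← Matrix.SpecialLinearGroup.coe_mul, inv_mul_cancel]
    simp

/-- Representatives of the Hecke points: the lattice of `g * hecke hn a` is the rescaled
sublattice `a ⬝ᵥ m ≡ 0` modulo `p` of `g ℤⁿ`. -/
def hecke (hn : n ≠ 0) (a : {a : Fin n → ZMod p // a ≠ 0}) : SLR n := (exists_hecke hn a).choose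

lemma mem_latticeVectors_mk_mul_hecke (hn : n ≠ 0) (a : {a : Fin n → ZMod p // a ≠ 0}) :
    v ∈ latticeVectors (QuotientGroup.mk (g * hecke hn a)) ↔
      ∃ m, a.1 ⬝ᵥ modVec n p m = 0 ∧ heckeHom p g m = v :=
  (exists_hecke hn a).choose_spec g v

/-- `SL(n, ℤ)` permutes the Hecke points through its contragredient action on `a`. -/
lemma exists_perm_mk_mul_hecke (hn : n ≠ 0) {γ : SLR n} (hγ : γ ∈ latticeGamma n) :
    ∃ σ : Equiv.Perm {a : Fin n → ZMod p // a ≠ 0}, ∀ a,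
      (QuotientGroup.mk (γ * hecke hn a) : LatticeSpace n) =
        QuotientGroup.mk (hecke hn (σ a)) := by
  obtain ⟨γ, rfl⟩ := hγ
  let e := Matrix.SpecialLinearGroup.toLin' (γ⁻¹.map (Int.castRingHom (ZMod p))).transpose
  have he : ∀ a m, e a ⬝ᵥ modVec n p (γ.1 *ᵥ m) = a ⬝ᵥ modVec n p m := by
    intro a m
    have hinv : (γ⁻¹.1 * γ.1).map (Int.castRingHom (ZMod p)) = 1 := by
      rw [← Matrix.SpecialLinearGroup.coe_mul, inv_mul_cancel]
      simp
    calc e a ⬝ᵥ modVec n p (γ.1 *ᵥ m)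
        = ((γ⁻¹.1.map (Int.castRingHom (ZMod p)))ᵀ *ᵥ a) ⬝ᵥ modVec n p (γ.1 *ᵥ m) := rfl
      _ = a ⬝ᵥ modVec n p m := by
        rw [Matrix.mulVec_transpose, modVec_mulVec, Matrix.dotProduct_mulVec,
          Matrix.vecMul_vecMul, ← Matrix.map_mul, hinv, Matrix.vecMul_one]
  refine ⟨e.toEquiv.subtypeEquiv fun a => (map_ne_zero_iff e e.injective).symm, fun a => ?_⟩
  refine mk_eq_mk_of_latticeVectors_le fun v hv => ?_
  obtain ⟨m, hm, rfl⟩ := (mem_latticeVectors_mk_mul_hecke hn a).1 hv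
  rw [← one_mul (hecke hn _), mem_latticeVectors_mk_mul_hecke]
  refine ⟨γ.1 *ᵥ m, (he a m).trans hm, ?_⟩
  rw [← heckeHom_mul_map, one_mul]

variable {R δ : ℝ≥0}

/-- Every vector of the sublattice that is primitive there but not in the full lattice is
divisible by `p` in the latter, hence long. -/
lemma heckeHom_mem_primitiveVectors_iff (hn : 2 ≤ n)
    (hδ : ∀ v ∈ latticeVectors (QuotientGroup.mk g), v ≠ 0 → δ ≤ ‖v‖₊)
    (a : {a : Fin n → ZMod p // a ≠ 0}) (hm : ‖heckeHom p g m‖₊ < heckeScale n p * δ) :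
    heckeHom p g m ∈
        primitiveVectors (latticeVectors (QuotientGroup.mk (g * hecke (by lia) a))) ↔
      m ∈ primitiveVectors (⊤ : AddSubgroup (Fin n → ℤ)) ∧ a.1 ⬝ᵥ modVec n p m = 0 := by
  have hp0 := hp.out.ne_zero
  have hinj := heckeHom_injective hp0 g
  have hmem : ∀ m, heckeHom p g m ∈ latticeVectors (QuotientGroup.mk (g * hecke (by lia) a)) ↔
      a.1 ⬝ᵥ modVec n p m = 0 := by
    intro m
    rw [mem_latticeVectors_mk_mul_hecke]
    constructor
    · rintro ⟨m', hm', h⟩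
      rwa [← hinj h]
    · exact fun h => ⟨m, h, rfl⟩
  have hprim : heckeHom p g m ∈ primitiveVectors (AddSubgroup.map (heckeHom p g) ⊤) ↔
      m ∈ primitiveVectors ⊤ := by
    rw [primitiveVectors_map hinj, hinj.mem_set_image]
  have hle : latticeVectors (QuotientGroup.mk (g * hecke (by lia) a)) ≤
      AddSubgroup.map (heckeHom p g) ⊤ := by
    intro v hv
    obtain ⟨m, -, rfl⟩ := (mem_latticeVectors_mk_mul_hecke (by lia) a).1 hv
    exact ⟨m, trivial, rfl⟩
  rw [← hprim, ← hmem]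
  refine ⟨fun h => ⟨by_contra fun hnot => ?_, h.1⟩,
    fun h => mem_primitiveVectors_of_le hle h.1 h.2⟩
  obtain ⟨_, ⟨w, -, rfl⟩, hw⟩ := exists_eq_prime_nsmul hp.out hle (by
    rintro _ ⟨w, -, rfl⟩
    rw [← map_nsmul, hmem, modVec_eq_zero_iff.2 ⟨w, rfl⟩, dotProduct_zero]) h hnot
  have hw0 : vecOfHom g w ≠ 0 := by
    intro h0
    refine ne_zero_of_mem_primitiveVectors h ?_
    rw [hw, heckeHom_apply, h0, smul_zero, smul_zero]
  refine hm.not_ge ?_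
  calc heckeScale n p * δ ≤ p / heckeScale n p * ‖vecOfHom g w‖₊ := by
        gcongr
        · exact heckeScale_le_div hn hp0
        · exact hδ _ (mem_latticeVectors_mk.2 ⟨w, rfl⟩) hw0
    _ = ‖heckeHom p g m‖₊ := by
      rw [hw, heckeHom_apply, ← Nat.cast_smul_eq_nsmul ℝ, nnnorm_smul, nnnorm_smul, nnnorm_inv,
        NNReal.nnnorm_eq]
      simp [div_eq_mul_inv, mul_assoc]

theorem primSum_mk_mul_hecke (hn : 2 ≤ n) {F : (Fin n → ℝ) → ℝ≥0∞}
    (hF : ∀ v, F v ≠ 0 → ‖v‖₊ ≤ R)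
    (hδ : ∀ v ∈ latticeVectors (QuotientGroup.mk g), v ≠ 0 → δ ≤ ‖v‖₊)
    (hR : R < heckeScale n p * δ) (a : {a : Fin n → ZMod p // a ≠ 0}) :
    primSum F (QuotientGroup.mk (g * hecke (by lia) a)) =
      ∑' m : primitiveVectors (⊤ : AddSubgroup (Fin n → ℤ)),
        if a.1 ⬝ᵥ modVec n p m = 0 then F (heckeHom p g m) else 0 := by
  classical
  have hinj := heckeHom_injective hp.out.ne_zero g
  have hsupp : Function.support ((primitiveVectors (latticeVectors (QuotientGroup.mk
      (g * hecke (by lia) a)))).indicator F) ⊆ Set.range (heckeHom p g) := by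
    intro v hv
    obtain ⟨m, -, rfl⟩ := (mem_latticeVectors_mk_mul_hecke (by lia) a).1
      (Set.mem_of_indicator_ne_zero hv).1
    exact ⟨m, rfl⟩
  rw [primSum, tsum_subtype, ← hinj.tsum_eq hsupp, tsum_subtype
    (f := fun m => if a.1 ⬝ᵥ modVec n p m = 0 then F (heckeHom p g m) else 0)]
  refine tsum_congr fun m => ?_
  by_cases h0 : F (heckeHom p g m) = 0
  · simp [Set.indicator_apply, h0]
  · have := heckeHom_mem_primitiveVectors_iff hn hδ a ((hF _ h0).trans_lt hR)
    simp only [Set.indicator_apply, this]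
    split_ifs <;> simp_all

end HeckePoints

section FiniteFieldCounting

variable {K ι κ : Type*} [Field K] [Fintype K] [DecidableEq K] [Fintype ι] [Fintype κ]
  [DecidableEq κ]

lemma card_filter_forall_dotProduct_eq_zero {v : ι → κ → K} (hv : LinearIndependent K v) :
    (Finset.univ.filter fun a : κ → K => ∀ i, a ⬝ᵥ v i = 0).card =
      Fintype.card K ^ (Fintype.card κ - Fintype.card ι) := by
  have hrank : (Matrix.of v).rank = Fintype.card ι := LinearIndependent.rank_matrix hv
  have hker : Module.finrank K (Matrix.of v).mulVecLin.ker =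
      Fintype.card κ - Fintype.card ι := by
    have := (Matrix.of v).mulVecLin.finrank_range_add_finrank_ker
    rw [Module.finrank_pi] at this
    rw [Matrix.rank] at hrank
    lia
  calc (Finset.univ.filter fun a : κ → K => ∀ i, a ⬝ᵥ v i = 0).card
      = Nat.card (Matrix.of v).mulVecLin.ker := by
        rw [← Fintype.card_subtype, ← Nat.card_eq_fintype_card]
        refine Nat.card_congr (Equiv.subtypeEquivRight fun a => ?_)
        simp [funext_iff, Matrix.mulVec, dotProduct_comm a]
    _ = Fintype.card K ^ (Fintype.card κ - Fintype.card ι) := by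
        rw [Module.natCard_eq_pow_finrank (K := K), hker, Nat.card_eq_fintype_card]

lemma card_filter_ne_zero_forall_dotProduct_eq_zero {v : ι → κ → K}
    (hv : LinearIndependent K v) :
    (Finset.univ.filter fun a : {a : κ → K // a ≠ 0} => ∀ i, a.1 ⬝ᵥ v i = 0).card =
      Fintype.card K ^ (Fintype.card κ - Fintype.card ι) - 1 := by
  rw [← card_filter_forall_dotProduct_eq_zero hv,
    ← Finset.card_erase_of_mem (a := (0 : κ → K)) (by simp),
    ← Finset.card_map (Function.Embedding.subtype _)]
  congr 1
  ext a
  simp [and_comm]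

end FiniteFieldCounting

section HeckeCounting

variable {n p : ℕ} {m m' : Fin n → ℤ}

lemma eq_or_eq_neg_of_zsmul_eq_zsmul {M : Type*} [AddCommGroup M] [IsAddTorsionFree M]
    {L : AddSubgroup M} {v w : M} {k l : ℤ} (hk : k ≠ 0) (hv : v ∈ primitiveVectors L)
    (hw : w ∈ primitiveVectors L) (h : k • v = l • w) : v = w ∨ v = -w := by
  wlog hkl : 0 ≤ k ∧ 0 ≤ l generalizing v w k l
  · rcases le_total 0 k with hk' | hk' <;> rcases le_total 0 l with hl' | hl'
    · exact this hk hv hw h ⟨hk', hl'⟩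
    · have := this (l := -l) hk hv (neg_mem_primitiveVectors hw) (by simpa) (by lia)
      simpa [or_comm] using this
    · have := this (k := -k) (by simpa) (neg_mem_primitiveVectors hv) hw (by simpa) (by lia)
      simpa [neg_eq_iff_eq_neg, or_comm] using this
    · exact this (k := -k) (l := -l) (by simpa) hv hw (by simpa) (by lia)
  lift k to ℕ using hkl.1
  lift l to ℕ using hkl.2
  exact .inl (eq_and_eq_of_nsmul_eq_nsmul (by exact_mod_cast hk) hv hw (by exact_mod_cast h)).2

variable [hp : Fact p.Prime]

lemma modVec_ne_zero (hm : m ∈ primitiveVectors (⊤ : AddSubgroup (Fin n → ℤ))) :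
    modVec n p m ≠ 0 := fun h => by
  obtain ⟨w, hw⟩ := modVec_eq_zero_iff.1 h
  exact hp.out.ne_one (hm.2 p w trivial hw)

/-- The `2 × 2` minors of a pair dependent modulo `p` are divisible by `p`, and vanish if they are
smaller than `p`. -/
lemma linearIndependent_modVec (hm : m ∈ primitiveVectors (⊤ : AddSubgroup (Fin n → ℤ)))
    (hm' : m' ∈ primitiveVectors (⊤ : AddSubgroup (Fin n → ℤ))) (hne : m ≠ m') (hneg : m ≠ -m')
    {N : ℤ} (hmN : ∀ i, |m i| ≤ N) (hmN' : ∀ i, |m' i| ≤ N) (hN : 2 * N ^ 2 < p) :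
    LinearIndependent (ZMod p) ![modVec n p m, modVec n p m'] := by
  refine (LinearIndependent.pair_iff' (modVec_ne_zero hm)).2 fun c hc => ?_
  have hminor : ∀ i j, m' i * m j - m' j * m i = 0 := fun i j => by
    refine Int.eq_zero_of_abs_lt_dvd (m := p) ?_ ?_
    · rw [← ZMod.intCast_zmod_eq_zero_iff_dvd]
      have hi : c * m i = m' i := congrFun hc i
      have hj : c * m j = m' j := congrFun hc j
      push_cast
      linear_combination (-(m j : ZMod p)) * hi + (m i : ZMod p) * hj
    · calc |m' i * m j - m' j * m i| ≤ |m' i| * |m j| + |m' j| * |m i| := by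
            rw [← abs_mul, ← abs_mul]
            exact abs_sub _ _
        _ ≤ N * N + N * N := by
            gcongr <;> first | exact (abs_nonneg _).trans (hmN i) | apply_assumption
        _ < p := by linarith
  obtain ⟨i, hi⟩ := Function.ne_iff.1 (ne_zero_of_mem_primitiveVectors hm')
  have hpar : m' i • m = m i • m' := funext fun j => by
    simp only [Pi.smul_apply, smul_eq_mul]
    linear_combination hminor i j
  rcases eq_or_eq_neg_of_zsmul_eq_zsmul hi hm hm' hpar with h | h
  exacts [hne h, hneg h]

end HeckeCounting

section RandomSubsets

/-- Second moment of a weighted count of the random sets `A m` containing a uniform point: all pairs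
`m, m'` other than `m' = m` and `m' = σ m` contribute as if they were independent. -/
lemma sum_sq_tsum_ite_mem_le {α P : Type*} [Fintype α] [DecidableEq α] {A : P → Finset α}
    {f : P → ℝ≥0∞} (σ : P → P) {k₁ k₂ : ℝ≥0∞} (hf : ∀ m, f m ≤ 1) (h₁ : ∀ m, (A m).card ≤ k₁)
    (h₂ : ∀ m m', f m ≠ 0 → f m' ≠ 0 → m' ≠ m → m' ≠ σ m → (A m ∩ A m').card ≤ k₂) :
    ∑ a, (∑' m, if a ∈ A m then f m else 0) ^ 2 ≤
      k₂ * (∑' m, f m) ^ 2 + 2 * (k₁ * ∑' m, f m) := by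
  classical
  have hpair : ∀ m m', ((A m ∩ A m').card : ℝ≥0∞) * (f m * f m') ≤
      k₂ * (f m * f m') + k₁ * (f m * ((if m' = m then 1 else 0) + if m' = σ m then 1 else 0)) := by
    intro m m'
    by_cases hexc : m' = m ∨ m' = σ m
    · refine le_add_of_nonneg_of_le zero_le ?_
      gcongr
      · exact (Nat.cast_le.2 (Finset.card_le_card Finset.inter_subset_left)).trans (h₁ m)
      · refine (hf m').trans ?_
        rcases hexc with h | h <;> simp [h]
    · rw [not_or] at hexc
      by_cases h0 : f m = 0 ∨ f m' = 0
      · rcases h0 with h | h <;> simp [h]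
      · rw [not_or] at h0
        refine le_add_of_le_of_nonneg ?_ zero_le
        gcongr
        exact h₂ m m' h0.1 h0.2 hexc.1 hexc.2
  calc ∑ a, (∑' m, if a ∈ A m then f m else 0) ^ 2
      = ∑' m, ∑' m', ((A m ∩ A m').card : ℝ≥0∞) * (f m * f m') := by
        simp only [sq, ← ENNReal.tsum_mul_left, ← ENNReal.tsum_mul_right]
        rw [← Summable.tsum_finsetSum fun _ _ => ENNReal.summable, ENNReal.tsum_comm]
        refine tsum_congr fun m => ?_
        rw [← Summable.tsum_finsetSum fun _ _ => ENNReal.summable]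
        refine tsum_congr fun m' => ?_
        simp only [ite_zero_mul_ite_zero]
        rw [← Finset.sum_filter, Finset.sum_const, nsmul_eq_mul, Finset.filter_and,
          Finset.filter_univ_mem, Finset.filter_univ_mem]
    _ ≤ ∑' m, ((∑' m', k₂ * (f m * f m')) + k₁ * (f m * 2)) := by
        refine ENNReal.tsum_le_tsum fun m => ?_
        refine (ENNReal.tsum_le_tsum (hpair m)).trans_eq ?_
        rw [ENNReal.tsum_add]
        simp only [ENNReal.tsum_mul_left, ENNReal.tsum_add, tsum_ite_eq, one_add_one_eq_two]
    _ = k₂ * (∑' m, f m) ^ 2 + 2 * (k₁ * ∑' m, f m) := by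
        simp only [ENNReal.tsum_add, ENNReal.tsum_mul_left, ENNReal.tsum_mul_right]
        ring

end RandomSubsets

lemma card_ne_zero_pi_zmod (n p : ℕ) [NeZero p] :
    Fintype.card {a : Fin n → ZMod p // a ≠ 0} = p ^ n - 1 := by
  simp [Fintype.card_subtype_compl, ZMod.card]

lemma two_mul_mul_le_add_sq (x y : ℝ≥0∞) : 2 * x * y ≤ x ^ 2 + y ^ 2 := by
  wlog h : x ≤ y generalizing x y
  · simpa [mul_right_comm, add_comm] using this y x (le_of_not_ge h)
  obtain ⟨d, rfl⟩ := exists_add_of_le h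
  calc 2 * x * (x + d) ≤ 2 * x * (x + d) + d ^ 2 := le_self_add
    _ = x ^ 2 + (x + d) ^ 2 := by ring

lemma pow_sub_one_bounds {n p : ℕ} (hn : 2 ≤ n) (hp : 1 ≤ p) :
    p ^ 2 * (p ^ (n - 2) - 1) + (p ^ n - 1) ≤ 2 * p * (p ^ (n - 1) - 1) ∧
      p * (p ^ (n - 1) - 1) ≤ p ^ n - 1 := by
  obtain ⟨k, rfl⟩ := Nat.exists_eq_add_of_le' hn
  have hpow : ∀ l, 1 ≤ p ^ l := fun l => Nat.one_le_pow _ _ hp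
  zify [hpow]
  rw [Nat.add_sub_cancel, show k + 2 - 1 = k + 1 from rfl, ← sub_nonneg]
  refine ⟨(sq_nonneg ((p : ℤ) - 1)).trans_eq (by ring), ?_⟩
  linarith [pow_succ' (p : ℤ) (k + 1)]

section HeckeMoments

variable {n p : ℕ} [hp : Fact p.Prime] {R δ : ℝ≥0} {g : SLR n} {F : (Fin n → ℝ) → ℝ≥0∞}

lemma card_filter_dotProduct_modVec_eq_zero {m : Fin n → ℤ}
    (hm : m ∈ primitiveVectors (⊤ : AddSubgroup (Fin n → ℤ))) :
    (Finset.univ.filter fun a : {a : Fin n → ZMod p // a ≠ 0} =>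
      a.1 ⬝ᵥ modVec n p m = 0).card = p ^ (n - 1) - 1 := by
  have := card_filter_ne_zero_forall_dotProduct_eq_zero
    (LinearIndependent.of_subsingleton (v := ![modVec n p m]) 0 (modVec_ne_zero hm))
  simpa only [Fin.forall_fin_one, Matrix.cons_val_zero, ZMod.card, Fintype.card_fin] using this

theorem sum_primSum_mk_mul_hecke (hn : 2 ≤ n) (hF : ∀ v, F v ≠ 0 → ‖v‖₊ ≤ R)
    (hδ : ∀ v ∈ latticeVectors (QuotientGroup.mk g), v ≠ 0 → δ ≤ ‖v‖₊)
    (hR : R < heckeScale n p * δ) :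
    ∑ a : {a : Fin n → ZMod p // a ≠ 0},
        primSum F (QuotientGroup.mk (g * hecke (by lia) a)) =
      (p ^ (n - 1) - 1 : ℕ) * primSum (dilate (heckeScale n p) F) (QuotientGroup.mk g) := by
  simp_rw [primSum_mk_mul_hecke hn hF hδ hR, primSum_mk]
  rw [← Summable.tsum_finsetSum fun _ _ => ENNReal.summable, ← ENNReal.tsum_mul_left]
  refine tsum_congr fun m => ?_
  rw [← Finset.sum_filter, Finset.sum_const, card_filter_dotProduct_modVec_eq_zero m.2,
    nsmul_eq_mul]
  rfl

theorem sum_primSum_mk_mul_hecke_sq_le (hn : 2 ≤ n) (hF : ∀ v, F v ≠ 0 → ‖v‖₊ ≤ R)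
    (hF1 : ∀ v, F v ≤ 1) (hδ : ∀ v ∈ latticeVectors (QuotientGroup.mk g), v ≠ 0 → δ ≤ ‖v‖₊)
    (hR : R < heckeScale n p * δ) {N : ℤ}
    (hN : ∀ m, ‖heckeHom p g m‖₊ ≤ R → ∀ i, |m i| ≤ N) (hNp : 2 * N ^ 2 < p) :
    ∑ a : {a : Fin n → ZMod p // a ≠ 0},
        primSum F (QuotientGroup.mk (g * hecke (by lia) a)) ^ 2 ≤
      (p ^ (n - 2) - 1 : ℕ) *
          primSum (dilate (heckeScale n p) F) (QuotientGroup.mk g) ^ 2 +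
        2 * ((p ^ (n - 1) - 1 : ℕ) *
          primSum (dilate (heckeScale n p) F) (QuotientGroup.mk g)) := by
  simp_rw [primSum_mk_mul_hecke hn hF hδ hR, primSum_mk]
  have key := sum_sq_tsum_ite_mem_le (f := fun m => F (heckeHom p g m))
    (A := fun m : primitiveVectors (⊤ : AddSubgroup (Fin n → ℤ)) =>
      Finset.univ.filter fun a : {a : Fin n → ZMod p // a ≠ 0} => a.1 ⬝ᵥ modVec n p m = 0)
    (k₁ := (p ^ (n - 1) - 1 : ℕ)) (k₂ := (p ^ (n - 2) - 1 : ℕ))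
    (fun m => ⟨-m, neg_mem_primitiveVectors m.2⟩) (fun m => hF1 _)
    (fun m => by rw [card_filter_dotProduct_modVec_eq_zero m.2]) ?_
  · simp only [Finset.mem_filter, Finset.mem_univ, true_and] at key
    exact key
  · intro m m' hm hm' hne hneg
    have hindep := linearIndependent_modVec m'.2 m.2 (Subtype.coe_ne_coe.2 hne)
      (fun h => hneg (Subtype.ext h)) (hN _ (hF _ hm')) (hN _ (hF _ hm)) hNp
    have := card_filter_ne_zero_forall_dotProduct_eq_zero hindep
    simp only [Fin.forall_fin_two, Matrix.cons_val_zero, Matrix.cons_val_one, ZMod.card,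
      Fintype.card_fin, Finset.filter_and] at this
    rw [← this, Finset.inter_comm]

/-- Chebyshev's inequality for the number of primitive vectors of a random Hecke point. -/
theorem card_filter_primSum_mk_mul_hecke_eq_zero_mul_le (hn : 2 ≤ n)
    (hF : ∀ v, F v ≠ 0 → ‖v‖₊ ≤ R)
    (hF1 : ∀ v, F v ≤ 1) (hδ : ∀ v ∈ latticeVectors (QuotientGroup.mk g), v ≠ 0 → δ ≤ ‖v‖₊)
    (hR : R < heckeScale n p * δ) {N : ℤ}
    (hN : ∀ m, ‖heckeHom p g m‖₊ ≤ R → ∀ i, |m i| ≤ N) (hNp : 2 * N ^ 2 < p)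
    (hfin : primSum (dilate (heckeScale n p) F) (QuotientGroup.mk g) ≠ ∞) :
    (Finset.univ.filter fun a : {a : Fin n → ZMod p // a ≠ 0} =>
        primSum F (QuotientGroup.mk (g * hecke (by lia) a)) = 0).card *
      primSum (dilate (heckeScale n p) F) (QuotientGroup.mk g) ≤ 2 * p * (p ^ n - 1 : ℕ) := by
  have h₁ := sum_primSum_mk_mul_hecke hn hF hδ hR
  have h₂ := sum_primSum_mk_mul_hecke_sq_le hn hF hF1 hδ hR hN hNp
  set S := primSum (dilate (heckeScale n p) F) (QuotientGroup.mk g)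
  set X := fun a : {a : Fin n → ZMod p // a ≠ 0} =>
    primSum F (QuotientGroup.mk (g * hecke (by lia) a))
  have hpoint : ∀ a, (if X a = 0 then S ^ 2 else 0) + 2 * (p * S) * X a ≤
      p ^ 2 * X a ^ 2 + S ^ 2 := by
    intro a
    split_ifs with h
    · simp [h]
    · calc 0 + 2 * (p * S) * X a = 2 * (p * X a) * S := by ring
        _ ≤ (p * X a) ^ 2 + S ^ 2 := two_mul_mul_le_add_sq _ _
        _ = p ^ 2 * X a ^ 2 + S ^ 2 := by rw [mul_pow]
  have hsum := Finset.sum_le_sum fun a (_ : a ∈ Finset.univ) => hpoint a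
  rw [Finset.sum_add_distrib, Finset.sum_add_distrib, ← Finset.sum_filter, Finset.sum_const,
    Finset.sum_const, ← Finset.mul_sum, ← Finset.mul_sum, h₁, Finset.card_univ,
    card_ne_zero_pi_zmod, nsmul_eq_mul, nsmul_eq_mul] at hsum
  generalize Finset.card _ = B at hsum ⊢
  rcases eq_or_ne S 0 with hS0 | hS0
  · simp [hS0]
  obtain ⟨hcard, hcard'⟩ := pow_sub_one_bounds hn hp.out.one_le
  have hT : 2 * (p * S) * ((p ^ (n - 1) - 1 : ℕ) * S) ≠ ∞ := by
    simp [ENNReal.mul_eq_top, hfin]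
  refine (ENNReal.mul_le_mul_iff_left hS0 hfin).1 ((ENNReal.add_le_add_iff_right hT).1 ?_)
  calc B * S * S + 2 * (p * S) * ((p ^ (n - 1) - 1 : ℕ) * S)
      ≤ p ^ 2 * ((p ^ (n - 2) - 1 : ℕ) * S ^ 2 + 2 * ((p ^ (n - 1) - 1 : ℕ) * S)) +
          (p ^ n - 1 : ℕ) * S ^ 2 := by
        rw [mul_assoc, ← sq]
        exact hsum.trans (by gcongr)
    _ = (p ^ 2 * (p ^ (n - 2) - 1) + (p ^ n - 1) : ℕ) * S ^ 2 +
          2 * p * (p * (p ^ (n - 1) - 1) : ℕ) * S := by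
        rw [Nat.cast_add, Nat.cast_mul, Nat.cast_mul p, Nat.cast_pow]
        ring
    _ ≤ (2 * p * (p ^ (n - 1) - 1) : ℕ) * S ^ 2 + 2 * p * (p ^ n - 1 : ℕ) * S := by
        gcongr
    _ = 2 * p * (p ^ n - 1 : ℕ) * S + 2 * (p * S) * ((p ^ (n - 1) - 1 : ℕ) * S) := by
        rw [Nat.cast_mul, Nat.cast_mul]
        push_cast
        ring

end HeckeMoments

section HeckeMean

variable {n : ℕ} {p : ℕ} [hp : Fact p.Prime] {F : LatticeSpace n → ℝ≥0∞}

/-- The Hecke operator: the average of `F` over the Hecke points of index `p` of a lattice. -/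
def heckeMean (hn : n ≠ 0) (p : ℕ) [Fact p.Prime] (F : LatticeSpace n → ℝ≥0∞)
    (Λ : LatticeSpace n) : ℝ≥0∞ :=
  (∫⁻ Λ', F Λ' ∂heckeMeasure (hecke (p := p) hn) Λ) / (p ^ n - 1 : ℕ)

lemma heckeMean_mk (hn : n ≠ 0) (hF : Measurable F) (g : SLR n) :
    heckeMean hn p F (QuotientGroup.mk g) =
      (∑ a : {a : Fin n → ZMod p // a ≠ 0}, F (QuotientGroup.mk (g * hecke hn a))) /
        (p ^ n - 1 : ℕ) := by
  rw [heckeMean, lintegral_heckeMeasure_mk (fun _ => exists_perm_mk_mul_hecke hn) hF]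

lemma measurable_heckeMean (hn : n ≠ 0) (hF : Measurable F) :
    Measurable (heckeMean hn p F) :=
  ((Measure.measurable_lintegral hF).comp
    (measurable_heckeMeasure fun _ => exists_perm_mk_mul_hecke hn)).div_const _

lemma pow_sub_one_ne_zero (hn : n ≠ 0) (p : ℕ) [hp : Fact p.Prime] :
    ((p ^ n - 1 : ℕ) : ℝ≥0∞) ≠ 0 := by
  have := Nat.one_lt_pow hn hp.out.one_lt
  rw [Nat.cast_ne_zero]
  lia

theorem lintegral_heckeMean {μ : Measure (LatticeSpace n)} [IsProbabilityMeasure μ]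
    [SMulInvariantMeasure (SLR n) (LatticeSpace n) μ] (hn : n ≠ 0) (p : ℕ) [Fact p.Prime]
    (hF : Measurable F) : ∫⁻ Λ, heckeMean hn p F Λ ∂μ = ∫⁻ Λ, F Λ ∂μ := by
  have hmeas : Measurable fun Λ => ∫⁻ Λ', F Λ' ∂heckeMeasure (hecke (p := p) hn) Λ :=
    (Measure.measurable_lintegral hF).comp
      (measurable_heckeMeasure fun _ => exists_perm_mk_mul_hecke hn)
  simp only [heckeMean, div_eq_mul_inv]
  rw [lintegral_mul_const _ hmeas,
    lintegral_lintegral_heckeMeasure (fun _ => exists_perm_mk_mul_hecke hn) hF,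
    card_ne_zero_pi_zmod, mul_right_comm,
    ENNReal.mul_inv_cancel (pow_sub_one_ne_zero hn p) (ENNReal.natCast_ne_top _), one_mul]

lemma heckeMean_le {c : ℝ≥0∞} (hn : n ≠ 0) (p : ℕ) [Fact p.Prime] (hF : ∀ Λ, F Λ ≤ c)
    (Λ : LatticeSpace n) : heckeMean hn p F Λ ≤ c := by
  refine ENNReal.div_le_of_le_mul ((lintegral_mono hF).trans_eq ?_)
  simp [heckeMeasure]

end HeckeMean

section HeckeAsymptotics

variable {n : ℕ} {K r R : ℝ≥0} {f : (Fin n → ℝ) → ℝ≥0∞}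

lemma tendsto_heckeScale (hn : n ≠ 0) : Tendsto (heckeScale n) atTop atTop :=
  (NNReal.tendsto_rpow_atTop (by positivity)).comp tendsto_natCast_atTop_atTop

lemma eventually_lt_heckeScale_mul (hn : n ≠ 0) (R : ℝ≥0) {δ : ℝ≥0} (hδ : 0 < δ) :
    ∀ᶠ p in atTop, R < heckeScale n p * δ :=
  ((tendsto_heckeScale hn).atTop_mul_const hδ).eventually_gt_atTop R

lemma exists_forall_abs_le_mul_norm_vecOfHom (g : SLR n) :
    ∃ C : ℝ, 0 ≤ C ∧ ∀ m i, |(m i : ℝ)| ≤ C * ‖vecOfHom g m‖ := by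
  let L := LinearMap.toContinuousLinearMap (Matrix.toLin' (g⁻¹).1)
  refine ⟨‖L‖, norm_nonneg _, fun m i => ?_⟩
  have hL : L (vecOfHom g m) = fun i => (m i : ℝ) := by
    change (g⁻¹).1 *ᵥ (g.1 *ᵥ fun i => (m i : ℝ)) = _
    rw [Matrix.mulVec_mulVec, ← Matrix.SpecialLinearGroup.coe_mul, inv_mul_cancel]
    simp
  exact (norm_le_pi_norm (L (vecOfHom g m)) i |>.trans_eq' (by rw [hL]; rfl)).trans
    (L.le_opNorm _)

/-- For `n ≥ 3`, the minors of vectors of the dilated ball are of size `p ^ (2 / n)`, which is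
less than `p`. -/
lemma eventually_exists_int_bound (hn : 3 ≤ n) (g : SLR n) (R : ℝ≥0) :
    ∀ᶠ p : ℕ in atTop, ∃ N : ℤ, 2 * N ^ 2 < p ∧
      ∀ m, ‖heckeHom p g m‖₊ ≤ R → ∀ i, |m i| ≤ N := by
  obtain ⟨C, hC0, hC⟩ := exists_forall_abs_le_mul_norm_vecOfHom g
  have hs := NNReal.tendsto_coe_atTop.2 (tendsto_heckeScale (n := n) (by lia))
  filter_upwards [hs.eventually_gt_atTop (2 * (C * R) ^ 2), hs.eventually_ge_atTop 1]
    with p hlarge hone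
  have hs0 : (heckeScale n p : ℝ) ≠ 0 := (zero_lt_one.trans_le hone).ne'
  refine ⟨⌊C * (heckeScale n p * R)⌋, ?_, fun m hm i => Int.le_floor.2 ?_⟩
  · have hpow : (heckeScale n p : ℝ) ^ n = p := by exact_mod_cast heckeScale_pow (by lia) p
    have hfloor : (⌊C * (heckeScale n p * R)⌋ : ℝ) ≤ C * (heckeScale n p * R) := Int.floor_le _
    have hfloor0 : (0 : ℝ) ≤ ⌊C * (heckeScale n p * R)⌋ := by positivity
    rify
    calc 2 * (⌊C * (heckeScale n p * R)⌋ : ℝ) ^ 2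
        ≤ 2 * (C * (heckeScale n p * R)) ^ 2 :=
          mul_le_mul_of_nonneg_left (pow_le_pow_left₀ hfloor0 hfloor 2) zero_le_two
      _ = 2 * (C * R) ^ 2 * (heckeScale n p : ℝ) ^ 2 := by ring
      _ < heckeScale n p * (heckeScale n p : ℝ) ^ 2 := by gcongr
      _ = (heckeScale n p : ℝ) ^ 3 := by ring
      _ ≤ (heckeScale n p : ℝ) ^ n := pow_le_pow_right₀ hone hn
      _ = p := hpow
  · have hnorm : ‖vecOfHom g m‖ = heckeScale n p * ‖heckeHom p g m‖ := by
      rw [heckeHom_apply, norm_smul, norm_inv, NNReal.norm_eq, mul_inv_cancel_left₀ hs0]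
    push_cast
    refine (hC m i).trans ?_
    rw [hnorm]
    gcongr
    exact_mod_cast hm

instance fact_prime_nth (k : ℕ) : Fact (Nat.nth Nat.Prime k).Prime := ⟨Nat.prime_nth_prime k⟩

lemma tendsto_nth_prime : Tendsto (Nat.nth Nat.Prime) atTop atTop :=
  (Nat.nth_strictMono Nat.infinite_setOfPred_prime).tendsto_atTop

lemma tendsto_primSum_dilate_heckeScale_div (hf : IsBump K r R f) (hn : 2 ≤ n)
    (Λ : LatticeSpace n) :
    Tendsto (fun p : ℕ => primSum (dilate (heckeScale n p) f) Λ / p) atTop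
      (nhds (siegelMean f)) := by
  have hscale : Tendsto (heckeScale n) atTop atTop := tendsto_heckeScale (by lia)
  refine ((tendsto_primSum_dilate hf hn Λ).comp hscale).congr fun p => ?_
  rw [Function.comp_apply, ← ENNReal.coe_pow, heckeScale_pow (by lia), ENNReal.coe_natCast]

lemma primSum_dilate_ne_top (hf : IsBump K r R f) (T : ℝ≥0) (Λ : LatticeSpace n) :
    primSum (dilate T f) Λ ≠ ∞ := by
  obtain ⟨C, hC⟩ := exists_forall_latticeSum_dilate_le hf Λ
  exact ne_top_of_le_ne_top (by exact_mod_cast ENNReal.coe_ne_top)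
    ((primSum_le_latticeSum _ _).trans (hC T))

lemma tendsto_mul_pow_sub_one_div_pow_sub_one (hn : 2 ≤ n) :
    Tendsto (fun p : ℕ => ((p * (p ^ (n - 1) - 1) : ℕ) : ℝ≥0∞) / (p ^ n - 1 : ℕ))
      atTop (nhds 1) := by
  have hinv : Tendsto (fun p : ℕ => 1 - (p : ℝ≥0∞)⁻¹) atTop (nhds 1) := by
    simpa using ENNReal.Tendsto.sub tendsto_const_nhds ENNReal.tendsto_inv_nat_nhds_zero (by simp)
  refine tendsto_of_tendsto_of_tendsto_of_le_of_le' hinv tendsto_const_nhds ?_ ?_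
  · filter_upwards [eventually_gt_atTop 1] with p hp
    have hpow : p ^ 2 ≤ p ^ n := Nat.pow_le_pow_right hp.le hn
    have hmul : p * p ^ (n - 1) = p ^ n := mul_pow_sub_one (by lia) p
    have hp2 : p + 1 ≤ p ^ 2 := by nlinarith
    have hsum : p ^ n - 1 = p * (p ^ (n - 1) - 1) + (p - 1) := by
      rw [mul_tsub, hmul, mul_one]
      lia
    have hle : (p - 1) * p ≤ 1 * (p ^ n - 1) := by
      rw [tsub_mul, ← sq]
      lia
    have hb : ((p ^ n - 1 : ℕ) : ℝ≥0∞) ≠ 0 := Nat.cast_ne_zero.2 (by lia)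
    rw [tsub_le_iff_right]
    calc (1 : ℝ≥0∞) = (p * (p ^ (n - 1) - 1) + (p - 1) : ℕ) / (p ^ n - 1 : ℕ) := by
          rw [← hsum, ENNReal.div_self hb (ENNReal.natCast_ne_top _)]
      _ = (p * (p ^ (n - 1) - 1) : ℕ) / (p ^ n - 1 : ℕ) + (p - 1 : ℕ) / (p ^ n - 1 : ℕ) := by
          rw [Nat.cast_add, ENNReal.add_div]
      _ ≤ _ := by
          gcongr
          rw [ENNReal.le_inv_iff_mul_le, ENNReal.mul_comm_div, ← mul_div_assoc]
          exact ENNReal.div_le_of_le_mul (by exact_mod_cast hle)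
  · filter_upwards [eventually_gt_atTop 0] with p hp
    exact ENNReal.div_le_of_le_mul (by rw [one_mul]; exact_mod_cast (pow_sub_one_bounds hn hp).2)

theorem tendsto_heckeMean_primSum (hf : IsBump K r R f) (hn : 2 ≤ n) (Λ : LatticeSpace n) :
    Tendsto (fun k => heckeMean (by lia) (Nat.nth Nat.Prime k) (primSum f) Λ) atTop
      (nhds (siegelMean f)) := by
  obtain ⟨δ, hδ0, hδ⟩ := exists_forall_le_nnnorm Λ
  induction Λ using QuotientGroup.induction_on with | H g
  have hlim := ENNReal.Tendsto.mul
    (tendsto_primSum_dilate_heckeScale_div hf hn (QuotientGroup.mk g)) (.inr (by simp))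
    (tendsto_mul_pow_sub_one_div_pow_sub_one hn) (.inl one_ne_zero)
  rw [mul_one] at hlim
  refine (hlim.comp tendsto_nth_prime).congr' ?_
  filter_upwards [tendsto_nth_prime.eventually
    (eventually_lt_heckeScale_mul (n := n) (by lia) R hδ0)] with k hR
  have hp : Nat.nth Nat.Prime k ≠ 0 := (Nat.prime_nth_prime k).ne_zero
  rw [heckeMean_mk _ (measurable_primSum hf.measurable),
    sum_primSum_mk_mul_hecke hn (fun _ => hf.nnnorm_le) hδ hR]
  simp only [Function.comp_apply]
  rw [← ENNReal.mul_div_mul_comm, Nat.cast_mul, mul_left_comm, ENNReal.mul_div_mul_left, mul_comm]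
  all_goals simp [hp]

variable {μ : Measure (LatticeSpace n)} [IsProbabilityMeasure μ]
  [SMulInvariantMeasure (SLR n) (LatticeSpace n) μ]

lemma eventually_heckeMean_le (hf : IsBump K r R f) (hn : 3 ≤ n) (Λ : LatticeSpace n) :
    ∀ᶠ p : ℕ in atTop, ∀ _ : Fact p.Prime,
      heckeMean (by lia) p ({Λ | primSum f Λ = 0}.indicator 1) Λ ≤
        2 / (primSum (dilate (heckeScale n p) f) Λ / p) := by
  have hn' : 2 ≤ n := by lia
  obtain ⟨δ, hδ0, hδ⟩ := exists_forall_le_nnnorm Λ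
  induction Λ using QuotientGroup.induction_on with | H g
  filter_upwards [eventually_lt_heckeScale_mul (n := n) (by lia) R hδ0,
    eventually_exists_int_bound hn g R] with p hR hN hp
  obtain ⟨N, hNp, hN⟩ := hN
  have hcard := card_filter_primSum_mk_mul_hecke_eq_zero_mul_le hn' (fun _ => hf.nnnorm_le)
    hf.le_one hδ hR hN hNp (primSum_dilate_ne_top hf _ _)
  have hA : MeasurableSet {Λ | primSum f Λ = 0} :=
    measurable_primSum hf.measurable (measurableSet_singleton 0)
  rw [heckeMean_mk _ (measurable_one.indicator hA), ENNReal.le_div_iff_mul_le (by simp) (by simp)]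
  simp only [Set.indicator_apply, Set.mem_ofPred_eq, Pi.one_apply, Finset.sum_boole]
  rw [← ENNReal.mul_div_mul_comm (.inr (ENNReal.natCast_ne_top p))
    (.inl (ENNReal.natCast_ne_top _))]
  refine ENNReal.div_le_of_le_mul (hcard.trans_eq ?_)
  ring

theorem measure_primSum_eq_zero_le_of_three_le (hf : IsBump K r R f) (hn : 3 ≤ n) :
    μ {Λ | primSum f Λ = 0} ≤ 2 / siegelMean f := by
  have hA : MeasurableSet {Λ | primSum f Λ = 0} :=
    measurable_primSum hf.measurable (measurableSet_singleton 0)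
  set A := {Λ | primSum f Λ = 0}
  have hn0 : n ≠ 0 := by lia
  let φ : ℕ → LatticeSpace n → ℝ≥0∞ := fun k =>
    heckeMean hn0 (Nat.nth Nat.Prime k) (A.indicator 1)
  have hφ : ∀ k, ∫⁻ Λ, φ k Λ ∂μ = μ A := fun k => by
    rw [lintegral_heckeMean hn0 _ (measurable_one.indicator hA), lintegral_indicator_one hA]
  have hφ1 : ∀ k Λ, φ k Λ ≤ 1 := fun k =>
    heckeMean_le hn0 _ (Set.indicator_le_self' fun _ _ => zero_le)
  have hlim : ∀ Λ, limsup (fun k => φ k Λ) atTop ≤ 2 / siegelMean f := by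
    intro Λ
    have hS := ENNReal.Tendsto.const_div (a := 2)
      ((tendsto_primSum_dilate_heckeScale_div hf (by lia) Λ).comp tendsto_nth_prime) (by simp)
    rw [← hS.limsup_eq]
    refine limsup_le_limsup ?_
    filter_upwards [tendsto_nth_prime.eventually (eventually_heckeMean_le hf hn Λ)] with k hk
    exact hk _
  calc μ A = limsup (fun k => ∫⁻ Λ, φ k Λ ∂μ) atTop := by simp [hφ]
    _ ≤ ∫⁻ Λ, limsup (fun k => φ k Λ) atTop ∂μ :=
      limsup_lintegral_le 1 (fun k => measurable_heckeMean hn0 (measurable_one.indicator hA))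
        (fun k => ae_of_all _ (hφ1 k)) (by simp)
    _ ≤ ∫⁻ _, 2 / siegelMean f ∂μ := lintegral_mono hlim
    _ = 2 / siegelMean f := by simp

end HeckeAsymptotics

/-! ### Second moments in the plane -/

section PlaneLattices

variable {K r R D D' : ℝ≥0} {f : (Fin 2 → ℝ) → ℝ≥0∞} {Λ : LatticeSpace 2} {v w : Fin 2 → ℝ}

lemma abs_mul_sub_mul_le_one (h : v 0 * w 1 - v 1 * w 0 = 1) (i j : Fin 2) :
    |v i * w j - v j * w i| ≤ 1 := by
  have h' : v 1 * w 0 - v 0 * w 1 = -1 := by linarith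
  fin_cases i <;> fin_cases j <;> simp [h, h']

lemma exists_norm_add_zsmul_le (h : v 0 * w 1 - v 1 * w 0 = 1) :
    ∃ k : ℤ, ‖w + k • v‖ ≤ ‖v‖ + ‖v‖⁻¹ := by
  obtain ⟨i, hmax⟩ := Finite.exists_max fun i => |v i|
  have hi : |v i| = ‖v‖ :=
    (norm_le_pi_norm v i).antisymm ((pi_norm_le_iff_of_nonneg (abs_nonneg _)).2 hmax)
  have hvi : v i ≠ 0 := by
    rw [← abs_pos, hi, norm_pos_iff]
    rintro rfl
    simp at h
  have hsplit : w + -⌊w i / v i⌋ • v = Int.fract (w i / v i) • v + (w - (w i / v i) • v) := by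
    rw [← Int.self_sub_floor, neg_smul, ← Int.cast_smul_eq_zsmul ℝ]
    module
  have hfract : ‖Int.fract (w i / v i) • v‖ ≤ ‖v‖ := by
    rw [norm_smul, norm_of_nonneg (Int.fract_nonneg _)]
    exact mul_le_of_le_one_left (norm_nonneg v) (Int.fract_lt_one _).le
  have hrest : ‖w - (w i / v i) • v‖ ≤ ‖v‖⁻¹ := by
    refine (pi_norm_le_iff_of_nonneg (by positivity)).2 fun j => ?_
    have : (w - (w i / v i) • v) j = (v i * w j - v j * w i) / v i := by
      simp only [Pi.sub_apply, Pi.smul_apply, smul_eq_mul]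
      field_simp
    rw [this, norm_div, norm_eq_abs, norm_eq_abs, hi, ← one_div]
    gcongr
    exact abs_mul_sub_mul_le_one h i j
  exact ⟨-⌊w i / v i⌋, hsplit ▸ (norm_add_le _ _).trans (add_le_add hfract hrest)⟩

lemma isCoprime_of_mem_primitiveVectors {m : Fin 2 → ℤ}
    (hm : m ∈ primitiveVectors (⊤ : AddSubgroup (Fin 2 → ℤ))) : IsCoprime (m 0) (m 1) := by
  obtain ⟨a, ha⟩ := Int.gcd_dvd_left (m 0) (m 1)
  obtain ⟨b, hb⟩ := Int.gcd_dvd_right (m 0) (m 1)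
  refine Int.isCoprime_iff_gcd_eq_one.2 (hm.2 _ ![a, b] trivial ?_)
  ext i
  fin_cases i <;> simpa

lemma HasCell.mono (h : HasCell D Λ) (hD : D ≤ D') : HasCell D' Λ := by
  obtain ⟨C, hC, hvol, hle⟩ := h
  exact ⟨C, hC, hvol, fun x hx => (hle x hx).trans hD⟩

lemma mk_mul_map (g : SLR 2) (γ : Matrix.SpecialLinearGroup (Fin 2) ℤ) :
    (QuotientGroup.mk (g * γ.map (Int.castRingHom ℝ)) : LatticeSpace 2) = QuotientGroup.mk g :=
  QuotientGroup.mk_mul_of_mem g ⟨γ, rfl⟩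

lemma exists_mk_eq_of_mem_primitiveVectors (hv : v ∈ primitiveVectors (latticeVectors Λ)) :
    ∃ g : SLR 2, QuotientGroup.mk g = Λ ∧ vecOfHom g (Pi.single 0 1) = v := by
  induction Λ using QuotientGroup.induction_on with | H g
  rw [primitiveVectors_latticeVectors_mk] at hv
  obtain ⟨m, hm, rfl⟩ := hv
  obtain ⟨γ, hγ0, hγ1⟩ := (isCoprime_of_mem_primitiveVectors hm).exists_SL2_col 0
  refine ⟨g * γ.map (Int.castRingHom ℝ), mk_mul_map g γ, ?_⟩
  rw [vecOfHom_mul_map, Matrix.mulVec_single_one]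
  congr 1
  ext i
  fin_cases i
  exacts [hγ0, hγ1]

theorem hasCell_of_mem_primitiveVectors (hv : v ∈ primitiveVectors (latticeVectors Λ)) :
    HasCell (2 * ‖v‖₊ + ‖v‖₊⁻¹) Λ := by
  obtain ⟨g, rfl, rfl⟩ := exists_mk_eq_of_mem_primitiveVectors hv
  have hdet : g.1 0 0 * g.1 1 1 - g.1 1 0 * g.1 0 1 = 1 := by
    linarith [g.2, Matrix.det_fin_two g.1]
  obtain ⟨k, hk⟩ := exists_norm_add_zsmul_le (v := g.1.col 0) (w := g.1.col 1) hdet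
  rw [← vecOfHom_single, ← vecOfHom_single, ← map_zsmul, ← map_add] at hk
  let T := ModularGroup.T ^ k
  have hT0 : T.1 *ᵥ Pi.single 0 1 = Pi.single 0 1 := by
    rw [ModularGroup.coe_T_zpow]
    ext i
    fin_cases i <;> simp
  have hT1 : T.1 *ᵥ Pi.single 1 1 = Pi.single 1 1 + k • Pi.single 0 1 := by
    rw [ModularGroup.coe_T_zpow]
    ext i
    fin_cases i <;> simp
  have := hasCell_mk (g * T.map (Int.castRingHom ℝ))
  rw [mk_mul_map, Fin.sum_univ_two, vecOfHom_mul_map,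
    vecOfHom_mul_map, hT0, hT1] at this
  refine this.mono ?_
  rw [two_mul, add_assoc]
  gcongr
  exact hk

lemma hasCell_of_primSum_ne_zero (hf : IsBump K r R f) (h : primSum f Λ ≠ 0) :
    HasCell (2 * R + r⁻¹) Λ := by
  obtain ⟨v, hv⟩ : ∃ v : primitiveVectors (latticeVectors Λ), f v ≠ 0 := by
    by_contra! h0
    exact h (ENNReal.tsum_eq_zero.2 h0)
  refine (hasCell_of_mem_primitiveVectors v.2).mono ?_
  gcongr
  exacts [hf.nnnorm_le hv, hf.pos, hf.le_nnnorm hv]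

lemma primSum_le (hf : IsBump K r R f) (Λ : LatticeSpace 2) :
    primSum f Λ ≤ (∫⁻ x, f x) + cellError 2 K R (2 * R + r⁻¹) := by
  by_cases h : primSum f Λ = 0
  · simp [h]
  · exact (primSum_le_latticeSum f Λ).trans (latticeSum_le hf (hasCell_of_primSum_ne_zero hf h))

variable {μ : Measure (LatticeSpace 2)} [IsProbabilityMeasure μ]
  [SMulInvariantMeasure (SLR 2) (LatticeSpace 2) μ]

theorem lintegral_primSum (hf : IsBump K r R f) : ∫⁻ Λ, primSum f Λ ∂μ = siegelMean f := by
  have hmeas := measurable_primSum (n := 2) hf.measurable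
  have hlim := tendsto_lintegral_of_dominated_convergence (μ := μ)
    (F := fun k => heckeMean two_ne_zero (Nat.nth Nat.Prime k) (primSum f))
    (fun _ => (∫⁻ x, f x) + cellError 2 K R (2 * R + r⁻¹))
    (fun k => measurable_heckeMean two_ne_zero hmeas)
    (fun k => ae_of_all _ (heckeMean_le two_ne_zero _ (primSum_le hf)))
    (by simp [hf.lintegral_lt_top.ne])
    (ae_of_all _ (tendsto_heckeMean_primSum hf le_rfl))
  simp only [lintegral_heckeMean two_ne_zero _ hmeas, lintegral_const, measure_univ,
    mul_one] at hlim
  exact tendsto_nhds_unique tendsto_const_nhds hlim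

lemma siegelMean_dilate {n : ℕ} {T : ℝ≥0} (hT : 0 < T) (f : (Fin n → ℝ) → ℝ≥0∞) :
    siegelMean (dilate T f) = T ^ n * siegelMean f := by
  rw [siegelMean, lintegral_dilate hT, mul_div_assoc, siegelMean]

end PlaneLattices

section OrbitSums

variable {Γ H : Type*} [Group Γ] [Group H]

lemma exists_forall_tsum_eq_tsum_tsum {φ : Γ →* H} (hφ : Function.Injective φ) {S : Set H}
    (hS : ∀ γ, ∀ s ∈ S, φ γ * s ∈ S) :
    ∃ t ⊆ S, ∀ Φ : H → ℝ≥0∞, ∑' s : S, Φ s = ∑' γ, ∑' b : t, Φ (φ γ * b) := by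
  obtain ⟨T, hT, -⟩ := φ.range.exists_isComplement_right 1
  let e : Γ × (T ∩ S : Set H) → S := fun x => ⟨φ x.1 * x.2, hS _ _ x.2.2.2⟩
  have he : Function.Bijective e := by
    constructor
    · rintro ⟨γ, b⟩ ⟨γ', b'⟩ h
      have := hT.injective (a₁ := (⟨φ γ, γ, rfl⟩, ⟨b, b.2.1⟩))
        (a₂ := (⟨φ γ', γ', rfl⟩, ⟨b', b'.2.1⟩)) (Subtype.ext_iff.1 h)
      rw [Prod.ext_iff, Subtype.ext_iff, Subtype.ext_iff] at this
      exact Prod.ext (hφ this.1) (Subtype.ext this.2)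
    · rintro ⟨s, hs⟩
      obtain ⟨⟨⟨_, γ, rfl⟩, b, hb⟩, rfl⟩ := hT.surjective s
      refine ⟨(γ, ⟨b, hb, ?_⟩), rfl⟩
      simpa using hS γ⁻¹ _ hs
  refine ⟨T ∩ S, Set.inter_subset_right, fun Φ => ?_⟩
  rw [← ENNReal.tsum_prod]
  exact ((Equiv.ofBijective e he).tsum_eq fun s : S => Φ s).symm

end OrbitSums

section PrimitiveFrames

variable {n : ℕ}

lemma latticeVectors_smul (g : SLR n) (Λ : LatticeSpace n) :
    latticeVectors (g • Λ) = (latticeVectors Λ).map (Matrix.mulVecLin g.1).toAddMonoidHom := by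
  induction Λ using QuotientGroup.induction_on with | H h
  have hcomp : vecOfHom (g * h) = (Matrix.mulVecLin g.1).toAddMonoidHom.comp (vecOfHom h) := by
    ext m
    simp [vecOfHom_apply, vecOf]
  rw [MulAction.Quotient.smul_mk, smul_eq_mul, latticeVectors_mk, latticeVectors_mk, hcomp,
    AddSubgroup.map_map]

lemma mulVec_mem_primitiveVectors_smul_iff {g : SLR n} {Λ : LatticeSpace n} {v : Fin n → ℝ} :
    g.1 *ᵥ v ∈ primitiveVectors (latticeVectors (g • Λ)) ↔
      v ∈ primitiveVectors (latticeVectors Λ) := by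
  have hinj : Function.Injective (Matrix.mulVecLin g.1).toAddMonoidHom :=
    Matrix.mulVec_injective_of_isUnit (by simp [Matrix.isUnit_iff_isUnit_det])
  rw [latticeVectors_smul, primitiveVectors_map hinj]
  exact hinj.mem_set_image

/-- The bases of `ℝⁿ` made of primitive vectors of `Λ`, encoded as the matrices having them as
columns. -/
def primitiveFrames (Λ : LatticeSpace n) : Set (GL (Fin n) ℝ) :=
  {b | ∀ j, b.1.col j ∈ primitiveVectors (latticeVectors Λ)}

lemma toGL_mul_mem_primitiveFrames_smul_iff {g : SLR n} {Λ : LatticeSpace n} {b : GL (Fin n) ℝ} :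
    g.toGL * b ∈ primitiveFrames (g • Λ) ↔ b ∈ primitiveFrames Λ :=
  forall_congr' fun _ => mulVec_mem_primitiveVectors_smul_iff

instance (Λ : LatticeSpace n) : Countable (primitiveFrames Λ) := by
  refine Function.Injective.countable
    (f := fun (b : primitiveFrames Λ) j => (⟨b.1.1.col j, (b.2 j).1⟩ : latticeVectors Λ))
    fun b b' h => Subtype.ext (Units.ext ?_)
  ext i j
  exact congrFun (Subtype.ext_iff.1 (congrFun h j)) i

/-- The sum of `Ψ` over the bases of `ℝⁿ` made of primitive vectors of `Λ`. -/
def frameSum (Ψ : (Fin n → Fin n → ℝ) → ℝ≥0∞) (Λ : LatticeSpace n) : ℝ≥0∞ :=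
  ∑' b : primitiveFrames Λ, Ψ b.1.1.col

lemma frameSum_smul (Ψ : (Fin n → Fin n → ℝ) → ℝ≥0∞) (g : SLR n) (Λ : LatticeSpace n) :
    frameSum Ψ (g • Λ) = ∑' b : primitiveFrames Λ, Ψ (g.1 * b.1.1).col :=
  (((Equiv.mulLeft g.toGL).subtypeEquiv fun _ =>
    toGL_mul_mem_primitiveFrames_smul_iff.symm).tsum_eq fun b => Ψ b.1.1.col).symm

lemma exists_forall_frameSum_mk_eq (n : ℕ) : ∃ t : Set (GL (Fin n) ℝ), t.Countable ∧
    ∀ (Ψ : (Fin n → Fin n → ℝ) → ℝ≥0∞) (g : SLR n), frameSum Ψ (QuotientGroup.mk g) =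
      ∑' γ : latticeGamma n, ∑' b : t, Ψ ((g * γ : SLR n).1 * b.1.1).col := by
  have hinj : Function.Injective
      ((Matrix.SpecialLinearGroup.toGL (n := Fin n) (R := ℝ)).comp (latticeGamma n).subtype) :=
    Matrix.SpecialLinearGroup.toGL_injective.comp Subtype.val_injective
  obtain ⟨t, htS, ht⟩ := exists_forall_tsum_eq_tsum_tsum hinj
    (S := primitiveFrames (QuotientGroup.mk 1 : LatticeSpace n)) fun γ b hb => by
      have hγ : γ.1 • (QuotientGroup.mk 1 : LatticeSpace n) = QuotientGroup.mk 1 := by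
        rw [MulAction.Quotient.smul_mk, smul_eq_mul, mul_one]
        exact QuotientGroup.eq.2 (by simp)
      rw [← hγ]
      exact toGL_mul_mem_primitiveFrames_smul_iff.2 hb
  refine ⟨t, (Set.to_countable _).mono htS, fun Ψ g => ?_⟩
  have hg : g • (QuotientGroup.mk 1 : LatticeSpace n) = QuotientGroup.mk g := by
    rw [MulAction.Quotient.smul_mk, smul_eq_mul, mul_one]
  rw [← hg, frameSum_smul]
  refine (ht fun b => Ψ (g.1 * b.1).col).trans ?_
  simp [Matrix.mul_assoc]

lemma measurable_col_mul {Ψ : (Fin n → Fin n → ℝ) → ℝ≥0∞} (hΨ : Measurable Ψ)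
    (b : Matrix (Fin n) (Fin n) ℝ) : Measurable fun h : SLR n => Ψ (h.1 * b).col := by
  refine hΨ.comp (Continuous.measurable ?_)
  have : Continuous fun h : SLR n => h.1 * b := continuous_induced_dom.matrix_mul continuous_const
  exact continuous_pi fun j => continuous_pi fun i => this.matrix_elem i j

lemma exists_forall_lintegral_frameSum_eq (μ : Measure (LatticeSpace n)) :
    ∃ t : Set (GL (Fin n) ℝ), ∀ Ψ : (Fin n → Fin n → ℝ) → ℝ≥0∞, Measurable Ψ →
      ∫⁻ Λ, frameSum Ψ Λ ∂μ = ∑' b : t, ∫⁻ h, Ψ (h.1 * b.1.1).col ∂liftMeasure μ := by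
  obtain ⟨t, htc, ht⟩ := exists_forall_frameSum_mk_eq n
  have := htc.to_subtype
  refine ⟨t, fun Ψ hΨ => ?_⟩
  have hmeas := fun b : t => measurable_col_mul hΨ b.1.1
  rw [← lintegral_tsum fun b => (hmeas b).aemeasurable]
  exact (lintegral_liftMeasure (.tsum hmeas) (ht Ψ)).symm

/-- Conjugation by `b`, as an endomorphism of `SL(n, ℝ)`. -/
def conjSL (b : GL (Fin n) ℝ) : SLR n →* SLR n where
  toFun d := ⟨b.1 * d.1 * b⁻¹.1, by
    rw [Matrix.det_mul_comm, ← mul_assoc, Units.inv_mul, one_mul, d.2]⟩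
  map_one' := Subtype.ext (by
    change b.1 * 1 * b⁻¹.1 = 1
    rw [mul_one, Units.mul_inv])
  map_mul' d d' := Subtype.ext (by
    change b.1 * (d.1 * d'.1) * b⁻¹.1 = b.1 * d.1 * b⁻¹.1 * (b.1 * d'.1 * b⁻¹.1)
    simp only [mul_assoc, Units.inv_mul_cancel_left])

lemma conjSL_mul (b : GL (Fin n) ℝ) (d : SLR n) : (conjSL b d).1 * b.1 = b.1 * d.1 :=
  Units.inv_mul_cancel_right _ b

theorem lintegral_frameSum_mul (μ : Measure (LatticeSpace n)) [IsProbabilityMeasure μ]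
    [SMulInvariantMeasure (SLR n) (LatticeSpace n) μ] {Ψ : (Fin n → Fin n → ℝ) → ℝ≥0∞}
    (hΨ : Measurable Ψ) {d : SLR n} (hd : IsConj d d⁻¹) :
    ∫⁻ Λ, frameSum (fun b => Ψ ((of b)ᵀ * d.1).col) Λ ∂μ = ∫⁻ Λ, frameSum Ψ Λ ∂μ := by
  obtain ⟨t, ht⟩ := exists_forall_lintegral_frameSum_eq μ
  have hmul : Measurable fun b : Fin n → Fin n → ℝ => ((of b)ᵀ * d.1).col := by
    refine measurable_pi_iff.2 fun j => measurable_pi_iff.2 fun i => ?_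
    simp only [Matrix.col_apply, Matrix.mul_apply, Matrix.transpose_apply, of_apply]
    fun_prop
  rw [ht _ hΨ]
  refine (ht _ (hΨ.comp hmul)).trans (tsum_congr fun b => ?_)
  have hconj : IsConj (conjSL b.1 d) (conjSL b.1 d)⁻¹ :=
    map_inv (conjSL b.1) d ▸ (conjSL b.1).map_isConj hd
  rw [← (measurePreserving_mul_right_liftMeasure μ hconj).lintegral_comp
    (measurable_col_mul hΨ b.1.1)]
  refine lintegral_congr fun h => congrArg Ψ (congrArg Matrix.col ?_)
  rw [Matrix.SpecialLinearGroup.coe_mul, mul_assoc, conjSL_mul, ← mul_assoc]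
  rfl

end PrimitiveFrames

section PlanePairs

variable {F G : (Fin 2 → ℝ) → ℝ≥0∞} {Λ : LatticeSpace 2}

lemma exists_det_eq_intCast {n : ℕ} {Λ : LatticeSpace n} {b : Matrix (Fin n) (Fin n) ℝ}
    (hb : ∀ j, b.col j ∈ latticeVectors Λ) : ∃ d : ℤ, b.det = d := by
  induction Λ using QuotientGroup.induction_on with | H g
  choose m hm using fun j => mem_latticeVectors_mk.1 (hb j)
  have hbg : b = g.1 * ((of m)ᵀ).map (Int.castRingHom ℝ) := by
    ext i j
    exact (congrFun (hm j) i).symm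
  refine ⟨((of m)ᵀ).det, ?_⟩
  rw [hbg, Matrix.det_mul, g.2, one_mul]
  exact ((Int.castRingHom ℝ).map_det _).symm

lemma eq_or_eq_neg_of_det_eq_zero {v w : Fin 2 → ℝ} (hv : v ∈ primitiveVectors (latticeVectors Λ))
    (hw : w ∈ primitiveVectors (latticeVectors Λ)) (h : (of ![v, w]).det = 0) :
    w = v ∨ w = -v := by
  induction Λ using QuotientGroup.induction_on with | H g
  rw [primitiveVectors_latticeVectors_mk] at hv hw
  obtain ⟨m, hm, rfl⟩ := hv
  obtain ⟨m', hm', rfl⟩ := hw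
  have hmul : (of ![vecOfHom g m, vecOfHom g m'])ᵀ =
      g.1 * ((of ![m, m'])ᵀ).map (Int.castRingHom ℝ) :=
    Matrix.ext fun i j => by fin_cases j <;> rfl
  have hdet : ((of ![m, m'])ᵀ).det = 0 := by
    rw [← Matrix.det_transpose, hmul, Matrix.det_mul, g.2, one_mul] at h
    exact Int.cast_injective (((Int.castRingHom ℝ).map_det _).trans (h.trans Int.cast_zero.symm))
  have hdet' : m 0 * m' 1 - m 1 * m' 0 = 0 := by simpa [Matrix.det_fin_two] using hdet
  obtain ⟨i, hi⟩ := Function.ne_iff.1 (ne_zero_of_mem_primitiveVectors hm)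
  have hpar : m i • m' = m' i • m := by
    ext j
    fin_cases i <;> fin_cases j <;> simp <;> linarith
  rcases eq_or_eq_neg_of_zsmul_eq_zsmul hi hm' hm hpar with rfl | rfl
  exacts [.inl rfl, .inr (map_neg _ _)]

/-- The sum of `F ⊗ G` over the pairs of linearly independent primitive vectors of `Λ`. -/
def pairSum (F G : (Fin 2 → ℝ) → ℝ≥0∞) (Λ : LatticeSpace 2) : ℝ≥0∞ :=
  frameSum (fun b => F (b 0) * G (b 1)) Λ

/-- The two columns of a primitive frame of `Λ`. -/
def frameColumns (b : primitiveFrames Λ) :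
    primitiveVectors (latticeVectors Λ) × primitiveVectors (latticeVectors Λ) :=
  (⟨_, b.2 0⟩, ⟨_, b.2 1⟩)

lemma frameColumns_injective : Function.Injective (frameColumns (Λ := Λ)) := by
  intro b b' h
  rw [Prod.ext_iff, Subtype.ext_iff, Subtype.ext_iff] at h
  refine Subtype.ext (Units.ext ?_)
  ext i j
  fin_cases j
  exacts [congrFun h.1 i, congrFun h.2 i]

lemma primSum_mul_primSum (F G : (Fin 2 → ℝ) → ℝ≥0∞) (Λ : LatticeSpace 2) :
    primSum F Λ * primSum G Λ = ∑' x : primitiveVectors (latticeVectors Λ) ×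
      primitiveVectors (latticeVectors Λ), F x.1 * G x.2 := by
  rw [ENNReal.tsum_prod', primSum, primSum, ← ENNReal.tsum_mul_right]
  exact tsum_congr fun v => ENNReal.tsum_mul_left.symm

lemma pairSum_le (F G : (Fin 2 → ℝ) → ℝ≥0∞) (Λ : LatticeSpace 2) :
    pairSum F G Λ ≤ primSum F Λ * primSum G Λ := by
  rw [primSum_mul_primSum]
  exact ENNReal.tsum_comp_le_tsum_of_injective frameColumns_injective fun x => F x.1 * G x.2

lemma primSum_mul_primSum_le (hG : ∀ x, G x ≤ 1) (Λ : LatticeSpace 2) :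
    primSum F Λ * primSum G Λ ≤ pairSum F G Λ + 2 * primSum F Λ := by
  let φ : primitiveVectors (latticeVectors Λ) × primitiveVectors (latticeVectors Λ) → ℝ≥0∞ :=
    fun x => F x.1 * G x.2
  let δ : primitiveVectors (latticeVectors Λ) × Bool →
    primitiveVectors (latticeVectors Λ) × primitiveVectors (latticeVectors Λ) :=
    fun x => (x.1, bif x.2 then x.1 else ⟨-x.1, neg_mem_primitiveVectors x.1.2⟩)
  have hsurj : Function.Surjective (Sum.elim frameColumns δ) := by
    rintro ⟨v, w⟩
    by_cases hdet : (of ![(v : Fin 2 → ℝ), w]).det = 0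
    · rcases eq_or_eq_neg_of_det_eq_zero v.2 w.2 hdet with h | h
      · exact ⟨.inr (v, true), Prod.ext rfl (Subtype.ext h.symm)⟩
      · exact ⟨.inr (v, false), Prod.ext rfl (Subtype.ext h.symm)⟩
    · rw [← Matrix.det_transpose] at hdet
      exact ⟨.inl ⟨.mkOfDetNeZero _ hdet, Fin.forall_fin_two.2 ⟨v.2, w.2⟩⟩, rfl⟩
  rw [primSum_mul_primSum]
  calc ∑' x, φ x ≤ ∑' y, φ (Sum.elim frameColumns δ y) :=
        ENNReal.tsum_le_tsum_comp_of_surjective hsurj φ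
    _ = pairSum F G Λ + ∑' v : primitiveVectors (latticeVectors Λ), ∑' s, φ (δ (v, s)) := by
      rw [← ENNReal.tsum_prod]
      exact Summable.tsum_sum ENNReal.summable ENNReal.summable
    _ ≤ pairSum F G Λ + 2 * primSum F Λ := by
      gcongr
      rw [primSum, ← ENNReal.tsum_mul_left]
      refine ENNReal.tsum_le_tsum fun v => ?_
      rw [tsum_bool, two_mul]
      exact add_le_add (mul_le_of_le_one_right' (hG _)) (mul_le_of_le_one_right' (hG _))

lemma pairSum_eq_zero {ρ σ : ℝ≥0} (hF : ∀ x, F x ≠ 0 → ‖x‖₊ ≤ ρ) (hG : ∀ x, G x ≠ 0 → ‖x‖₊ ≤ σ)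
    (hρσ : 2 * ρ * σ < 1) (Λ : LatticeSpace 2) : pairSum F G Λ = 0 := by
  refine ENNReal.tsum_eq_zero.2 fun b => ?_
  by_contra h
  obtain ⟨d, hd⟩ := exists_det_eq_intCast fun j => (b.2 j).1
  have hd0 : d ≠ 0 := by
    rintro rfl
    exact Matrix.GeneralLinearGroup.det_ne_zero b.1 (by simpa using hd)
  have hρ := hF _ (left_ne_zero_of_mul h)
  have hσ := hG _ (right_ne_zero_of_mul h)
  have hone : (1 : ℝ) ≤ |(d : ℝ)| := by exact_mod_cast Int.one_le_abs hd0
  rw [← hd, Matrix.det_fin_two] at hone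
  have hentry : ∀ i j, |b.1.1 i j| ≤ ‖b.1.1.col j‖ := fun i j => norm_le_pi_norm (b.1.1.col j) i
  have hprod : ‖b.1.1.col 0‖ * ‖b.1.1.col 1‖ ≤ ρ * σ :=
    mul_le_mul (NNReal.coe_le_coe.2 hρ) (NNReal.coe_le_coe.2 hσ) (norm_nonneg _) ρ.2
  have hlt : 2 * (ρ * σ : ℝ) < 1 := by
    rw [← mul_assoc]
    exact_mod_cast hρσ
  refine hone.not_gt ?_
  calc _ ≤ |b.1.1 0 0| * |b.1.1 1 1| + |b.1.1 1 0| * |b.1.1 0 1| := by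
        rw [mul_comm (b.1.1 0 1), ← abs_mul, ← abs_mul]
        exact abs_sub _ _
    _ ≤ ‖b.1.1.col 0‖ * ‖b.1.1.col 1‖ + ‖b.1.1.col 0‖ * ‖b.1.1.col 1‖ := by
        gcongr <;> exact hentry _ _
    _ < 1 := by linarith only [hprod, hlt]

end PlanePairs

section DiagonalFlow

variable {F G : (Fin 2 → ℝ) → ℝ≥0∞}

/-- The diagonal matrix with entries `l` and `l⁻¹`. -/
def diagSL (l : ℝˣ) : SLR 2 := ⟨!![(l : ℝ), 0; 0, (l⁻¹ : ℝˣ)], by simp⟩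

lemma isConj_diagSL_inv (l : ℝˣ) : IsConj (diagSL l) (diagSL l)⁻¹ := by
  let w : SLR 2 := ⟨!![0, -1; 1, 0], by simp⟩
  refine isConj_iff.2 ⟨w, mul_inv_eq_iff_eq_mul.2 (Subtype.ext ?_)⟩
  rw [Matrix.SpecialLinearGroup.coe_mul, Matrix.SpecialLinearGroup.coe_mul,
    Matrix.SpecialLinearGroup.coe_inv]
  simp [w, diagSL, Matrix.adjugate_fin_two]

lemma lintegral_pairSum_dilate (μ : Measure (LatticeSpace 2)) [IsProbabilityMeasure μ]
    [SMulInvariantMeasure (SLR 2) (LatticeSpace 2) μ] (hF : Measurable F) (hG : Measurable G)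
    {l : ℝ≥0} (hl : l ≠ 0) :
    ∫⁻ Λ, pairSum (dilate l F) (dilate l⁻¹ G) Λ ∂μ = ∫⁻ Λ, pairSum F G Λ ∂μ := by
  have hΨ : Measurable fun b : Fin 2 → Fin 2 → ℝ => F (b 0) * G (b 1) := by fun_prop
  have hl' : (l : ℝ)⁻¹ ≠ 0 := inv_ne_zero (NNReal.coe_ne_zero.2 hl)
  refine Eq.trans ?_ (lintegral_frameSum_mul μ hΨ (isConj_diagSL_inv (.mk0 _ hl')))
  refine lintegral_congr fun Λ => congrArg (frameSum · Λ) (funext fun b => ?_)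
  refine congrArg₂ (F · * G ·) ?_ ?_ <;> ext i <;> simp [diagSL, Matrix.mul_apply, mul_comm]

end DiagonalFlow

section SecondMoment

lemma tendsto_sum_inv_add_one : Tendsto (fun D : ℕ =>
    ((∑ k ∈ Finset.range D, ((k : ℝ≥0) + 1)⁻¹ : ℝ≥0) : ℝ≥0∞)) atTop (nhds ∞) := by
  rw [ENNReal.tendsto_coe_nhds_top, ← NNReal.tendsto_coe_atTop]
  simpa using Real.tendsto_sum_range_one_div_nat_succ_atTop

lemma sum_inv_add_one_sq_add_inv_le {D m : ℕ} (hD : D ≠ 0) (hm : D ≤ m) :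
    ∑ k ∈ Finset.range m, ((k : ℝ≥0) + 1)⁻¹ ^ 2 + (m : ℝ≥0)⁻¹ ≤
      ∑ k ∈ Finset.range D, ((k : ℝ≥0) + 1)⁻¹ ^ 2 + (D : ℝ≥0)⁻¹ := by
  induction m, hm using Nat.le_induction with
  | base => rfl
  | succ m hm ih =>
    refine le_trans ?_ ih
    have hm0 : 0 < (m : ℝ) := by exact_mod_cast (Nat.pos_of_ne_zero hD).trans_le hm
    rw [Finset.sum_range_succ, add_assoc]
    gcongr
    rw [← NNReal.coe_le_coe]
    push_cast
    field_simp
    nlinarith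

lemma natCast_mul_zetaSum_two_le (D : ℕ) :
    D * zetaSum 2 ≤ D * (∑ k ∈ Finset.range D, ((k : ℝ≥0) + 1)⁻¹ ^ 2 : ℝ≥0) + 1 := by
  rcases eq_or_ne D 0 with rfl | hD
  · simp
  have hzeta : zetaSum 2 = ∑' k : ℕ, ((((k : ℝ≥0) + 1)⁻¹ ^ 2 : ℝ≥0) : ℝ≥0∞) := by
    rw [zetaSum, tsum_pnat_eq_tsum_succ (f := fun k : ℕ => ((k : ℝ≥0∞) ^ 2)⁻¹)]
    refine tsum_congr fun k => ?_
    rw [inv_pow, ENNReal.coe_inv (by positivity)]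
    push_cast
    rfl
  have hle : zetaSum 2 ≤ (∑ k ∈ Finset.range D, ((k : ℝ≥0) + 1)⁻¹ ^ 2 : ℝ≥0) +
      ((D : ℝ≥0)⁻¹ : ℝ≥0) := by
    rw [hzeta, ← ENNReal.coe_add]
    refine le_of_tendsto (ENNReal.tendsto_nat_tsum _) ?_
    filter_upwards [eventually_ge_atTop D] with m hm
    rw [← ENNReal.ofNNReal_finsetSum]
    exact ENNReal.coe_le_coe.2 (le_self_add.trans (sum_inv_add_one_sq_add_inv_le hD hm))
  refine (mul_le_mul_right hle _).trans_eq ?_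
  rw [mul_add, ← ENNReal.coe_natCast D, ← ENNReal.coe_mul _ (D : ℝ≥0)⁻¹,
    mul_inv_cancel₀ (Nat.cast_ne_zero.2 hD), ENNReal.coe_one]

variable {b e u v : ℝ≥0∞} {N : ℝ≥0} {C : ℝ≥0 → ℝ≥0∞}

/-- The main terms `T ^ 2 * b` of the lower bounds add up to that of the upper bound, so that only
the harmonic sums of `u` and `v` survive. -/
lemma sum_inv_add_one_mul_le (hN : 0 < N) (hb : b ≠ ∞)
    (hlow : ∀ T ≥ N, T ^ 2 * b + T * u ≤ C T + T * v)
    (hup : ∀ T ≥ N, ∀ D : ℕ, ∑ k ∈ Finset.range D, C (T * ((k : ℝ≥0) + 1)⁻¹) ≤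
      T ^ 2 * (zetaSum 2 * b) + T * e) {D : ℕ} (hD : D ≠ 0) :
    (∑ k ∈ Finset.range D, ((k : ℝ≥0) + 1)⁻¹ : ℝ≥0) * u ≤
      N * b + e + (∑ k ∈ Finset.range D, ((k : ℝ≥0) + 1)⁻¹ : ℝ≥0) * v := by
  let T : ℝ≥0 := N * D
  set H : ℝ≥0 := ∑ k ∈ Finset.range D, ((k : ℝ≥0) + 1)⁻¹
  let Q : ℝ≥0 := ∑ k ∈ Finset.range D, ((k : ℝ≥0) + 1)⁻¹ ^ 2
  have hsum : T ^ 2 * Q * b + T * (H * u) ≤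
      T ^ 2 * Q * b + T * (N * b + e + H * v) := by
    calc _ = ∑ k ∈ Finset.range D, ((T * ((k : ℝ≥0) + 1)⁻¹ : ℝ≥0) ^ 2 * b +
          (T * ((k : ℝ≥0) + 1)⁻¹ : ℝ≥0) * u) := by
          simp only [H, Q, ENNReal.ofNNReal_finsetSum, Finset.mul_sum, Finset.sum_mul,
            ← Finset.sum_add_distrib, ENNReal.coe_mul, ENNReal.coe_pow]
          refine Finset.sum_congr rfl fun k _ => ?_
          ring
      _ ≤ ∑ k ∈ Finset.range D, (C (T * ((k : ℝ≥0) + 1)⁻¹) +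
            (T * ((k : ℝ≥0) + 1)⁻¹ : ℝ≥0) * v) := by
          refine Finset.sum_le_sum fun k hk => hlow _ ?_
          rw [ge_iff_le, le_mul_inv_iff₀ (by positivity)]
          exact mul_le_mul_right (by exact_mod_cast Finset.mem_range.1 hk) N
      _ ≤ T ^ 2 * (zetaSum 2 * b) + T * e + T * (H * v) := by
          rw [Finset.sum_add_distrib]
          refine add_le_add (hup _ ?_ D) (le_of_eq ?_)
          · exact le_mul_of_one_le_right' (by exact_mod_cast Nat.one_le_iff_ne_zero.2 hD)
          · simp only [H, ENNReal.ofNNReal_finsetSum, Finset.mul_sum, Finset.sum_mul,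
              ENNReal.coe_mul, mul_assoc]
      _ = T * N * b * (D * zetaSum 2) + T * e + T * (H * v) := by
          simp only [T, ENNReal.coe_mul, ENNReal.coe_natCast]
          ring
      _ ≤ T * N * b * (D * Q + 1) + T * e + T * (H * v) := by
          gcongr
          exact natCast_mul_zetaSum_two_le D
      _ = _ := by
          simp only [T, ENNReal.coe_mul, ENNReal.coe_natCast]
          ring
  rw [ENNReal.add_le_add_iff_left (by finiteness)] at hsum
  have hT : (T : ℝ≥0∞) ≠ 0 := by simp [T, hD, hN.ne']
  exact (ENNReal.mul_le_mul_iff_right hT ENNReal.coe_ne_top).1 hsum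

lemma le_of_forall_sum_le (hN : 0 < N) (hb : b ≠ ∞) (he : e ≠ ∞)
    (hlow : ∀ T ≥ N, T ^ 2 * b + T * u ≤ C T + T * v)
    (hup : ∀ T ≥ N, ∀ D : ℕ, ∑ k ∈ Finset.range D, C (T * ((k : ℝ≥0) + 1)⁻¹) ≤
      T ^ 2 * (zetaSum 2 * b) + T * e) : u ≤ v := by
  have hlim := (ENNReal.Tendsto.const_div (a := N * b + e) tendsto_sum_inv_add_one
    (.inr (by finiteness))).add_const v
  rw [ENNReal.div_top, zero_add] at hlim
  refine ge_of_tendsto hlim ?_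
  filter_upwards [eventually_ne_atTop 0] with D hD
  set H : ℝ≥0 := ∑ k ∈ Finset.range D, ((k : ℝ≥0) + 1)⁻¹
  have hH : (H : ℝ≥0∞) ≠ 0 := by
    have : 0 < H := Finset.sum_pos (fun _ _ => by positivity) (by simpa using hD)
    exact_mod_cast this.ne'
  rw [← ENNReal.mul_le_mul_iff_right hH ENNReal.coe_ne_top, mul_add,
    ENNReal.mul_div_cancel hH ENNReal.coe_ne_top]
  exact sum_inv_add_one_mul_le hN hb hlow hup hD

variable {K r R T : ℝ≥0} {f : (Fin 2 → ℝ) → ℝ≥0∞} {μ : Measure (LatticeSpace 2)}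
  [IsProbabilityMeasure μ] [SMulInvariantMeasure (SLR 2) (LatticeSpace 2) μ]

lemma lintegral_primSum_dilate (hf : IsBump K r R f) (hT : 0 < T) :
    ∫⁻ Λ, primSum (dilate T f) Λ ∂μ = T ^ 2 * siegelMean f :=
  (lintegral_primSum (hf.dilate hT)).trans (siegelMean_dilate hT f)

lemma two_mul_add_le_of_sq_le {P Q X Y a T : ℝ≥0∞} (hP : P ≤ X * Y) (hX : X * X ≤ Q + 2 * X)
    (hY : Y * Y ≤ 2 * Y) :
    2 * T * P + (2 * T * a * X + 2 * T * a * Y + 2 * T * a ^ 2) ≤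
      Q + ((2 + 2 * a) * X + T ^ 2 * (2 + 2 * a) * Y + (1 + T ^ 2) * a ^ 2) :=
  calc _ ≤ 2 * T * (X * Y) + (2 * T * a * X + 2 * T * a * Y + 2 * T * a ^ 2) := by gcongr
    _ = 2 * (X + a) * (T * (Y + a)) := by ring
    _ ≤ (X + a) ^ 2 + (T * (Y + a)) ^ 2 := two_mul_mul_le_add_sq _ _
    _ = X * X + T ^ 2 * (Y * Y) + (2 * a * X + T ^ 2 * (2 * a) * Y + (1 + T ^ 2) * a ^ 2) := by
      ring
    _ ≤ Q + 2 * X + T ^ 2 * (2 * Y) + (2 * a * X + T ^ 2 * (2 * a) * Y + (1 + T ^ 2) * a ^ 2) := by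
      gcongr
    _ = _ := by ring

lemma two_mul_lintegral_add_le {α : Type*} [MeasurableSpace α] {ν : Measure α}
    [IsProbabilityMeasure ν] {P Q X Y : α → ℝ≥0∞} {a T : ℝ≥0∞} (hP : ∀ z, P z ≤ X z * Y z)
    (hX : ∀ z, X z * X z ≤ Q z + 2 * X z) (hY : ∀ z, Y z * Y z ≤ 2 * Y z) (hXm : Measurable X)
    (hYm : Measurable Y) (hT : T ≠ ∞) :
    2 * T * ∫⁻ z, P z ∂ν +
        (2 * T * a * ∫⁻ z, X z ∂ν + 2 * T * a * ∫⁻ z, Y z ∂ν + 2 * T * a ^ 2) ≤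
      ∫⁻ z, Q z ∂ν + ((2 + 2 * a) * ∫⁻ z, X z ∂ν + T ^ 2 * (2 + 2 * a) * ∫⁻ z, Y z ∂ν +
        (1 + T ^ 2) * a ^ 2) := by
  have hlin : ∀ b c d : ℝ≥0∞, ∫⁻ z, (b * X z + c * Y z + d) ∂ν =
      b * ∫⁻ z, X z ∂ν + c * ∫⁻ z, Y z ∂ν + d := by
    intro b c d
    rw [lintegral_add_right _ measurable_const, lintegral_add_right _ (hYm.const_mul c),
      lintegral_const_mul b hXm, lintegral_const_mul c hYm, lintegral_const, measure_univ, mul_one]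
  rw [← hlin, ← hlin, ← lintegral_const_mul' _ _ (by finiteness),
    ← lintegral_add_right _ (by fun_prop), ← lintegral_add_right _ (by fun_prop)]
  exact lintegral_mono fun z => two_mul_add_le_of_sq_le (hP z) (hX z) (hY z)

lemma sq_mul_add_le_of_two_mul_add_le {T a o C : ℝ≥0∞} (hT0 : T ≠ 0) (hT : T ≠ ∞) (ha : a ≠ ∞)
    (h : 2 * T * o + (2 * T * a * (T * a) + 2 * T * a * (T⁻¹ * a) + 2 * T * a ^ 2) ≤
      C + ((2 + 2 * a) * (T * a) + T ^ 2 * (2 + 2 * a) * (T⁻¹ * a) + (1 + T ^ 2) * a ^ 2)) :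
    T ^ 2 * a ^ 2 + T * (2 * o) ≤ C + T * (2 * a ^ 2 + 4 * a) := by
  have hcancel : T * T⁻¹ = 1 := ENNReal.mul_inv_cancel hT0 hT
  rw [← ENNReal.add_le_add_iff_right (a := T ^ 2 * a ^ 2 + 2 * T * a ^ 2 + a ^ 2) (by finiteness)]
  calc T ^ 2 * a ^ 2 + T * (2 * o) + (T ^ 2 * a ^ 2 + 2 * T * a ^ 2 + a ^ 2)
      ≤ T ^ 2 * a ^ 2 + T * (2 * o) + (T ^ 2 * a ^ 2 + 2 * T * a ^ 2 + a ^ 2) + a ^ 2 := le_self_add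
    _ = 2 * T * o + (2 * T * a * (T * a) + 2 * (T * T⁻¹) * a ^ 2 + 2 * T * a ^ 2) := by
      rw [hcancel]
      ring
    _ = 2 * T * o + (2 * T * a * (T * a) + 2 * T * a * (T⁻¹ * a) + 2 * T * a ^ 2) := by ring
    _ ≤ _ := h
    _ = C + ((2 + 2 * a) * (T * a) + T * (T * T⁻¹) * (2 + 2 * a) * a + (1 + T ^ 2) * a ^ 2) := by
      ring
    _ = _ := by
      rw [hcancel]
      ring

/-- Both sides come from `0 ≤ (X + a - T * (Y + a)) ^ 2` for the sums `X` over the dilation by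
`√T` and `Y` over the dilation by `1 / √T`, the latter having no pairs of independent vectors. -/
lemma sq_mul_add_le_lintegral_pairSum_dilate (hf : IsBump K r R f) (hT : 2 * R ^ 2 < T) :
    T ^ 2 * siegelMean f ^ 2 + T * (2 * ∫⁻ Λ, pairSum f f Λ ∂μ) ≤
      ∫⁻ Λ, pairSum (dilate T f) f Λ ∂μ + T * (2 * siegelMean f ^ 2 + 4 * siegelMean f) := by
  have hT0 : T ≠ 0 := (zero_le.trans_lt hT).ne'
  obtain ⟨t, rfl⟩ : ∃ t : ℝ≥0, t ^ 2 = T := ⟨NNReal.sqrt T, NNReal.sq_sqrt T⟩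
  have ht : 0 < t := by
    rw [pos_iff_ne_zero]
    rintro rfl
    simp at hT0
  have ht' : 0 < t⁻¹ := inv_pos.2 ht
  have hfm := hf.measurable
  have hft := hf.dilate ht
  have hft' := hf.dilate ht'
  have ha := siegelMean_ne_top hf
  set a := siegelMean f
  have hX := measurable_primSum hft.measurable
  have hY := measurable_primSum hft'.measurable
  have hXint : ∫⁻ Λ, primSum (dilate t f) Λ ∂μ = t ^ 2 * a := lintegral_primSum_dilate hf ht
  have hYint : ∫⁻ Λ, primSum (dilate t⁻¹ f) Λ ∂μ = (t ^ 2 : ℝ≥0∞)⁻¹ * a := by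
    rw [lintegral_primSum_dilate hf ht', ENNReal.coe_inv ht.ne', ENNReal.inv_pow]
  have hQ : ∫⁻ Λ, pairSum (dilate t f) (dilate t f) Λ ∂μ =
      ∫⁻ Λ, pairSum (dilate (t ^ 2) f) f Λ ∂μ := by
    rw [← lintegral_pairSum_dilate μ hft.measurable hft.measurable ht.ne', dilate_dilate,
      dilate_dilate, inv_mul_cancel₀ ht.ne', dilate_one, sq]
  have hzero : ∀ Λ, pairSum (dilate t⁻¹ f) (dilate t⁻¹ f) Λ = 0 := by
    refine pairSum_eq_zero (fun _ => hft'.nnnorm_le) (fun _ => hft'.nnnorm_le) ?_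
    calc 2 * (t⁻¹ * R) * (t⁻¹ * R) = (t ^ 2)⁻¹ * (2 * R ^ 2) := by ring
      _ < 1 := (inv_mul_lt_one₀ (by positivity)).2 hT
  have hmean := two_mul_lintegral_add_le (ν := μ) (a := a) (T := (t ^ 2 : ℝ≥0))
    (pairSum_le (dilate t f) (dilate t⁻¹ f)) (primSum_mul_primSum_le hft.le_one)
    (fun Λ => (primSum_mul_primSum_le hft'.le_one Λ).trans_eq (by rw [hzero, zero_add])) hX hY
    ENNReal.coe_ne_top
  rw [hXint, hYint, hQ, lintegral_pairSum_dilate μ hfm hfm ht.ne'] at hmean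
  rw [ENNReal.coe_pow] at hmean ⊢
  exact sq_mul_add_le_of_two_mul_add_le (by simp [ht.ne']) (by finiteness) ha hmean

lemma mul_cellError_div_le {n : ℕ} {D : ℝ≥0} (hT : 1 ≤ T) :
    T * cellError n K R (D / T) ≤ cellError n K R D := by
  have hD : D / T ≤ D := div_le_self zero_le hT
  calc T * cellError n K R (D / T) = K * (T * (D / T)) * (2 * (R + D / T)) ^ n := by
        rw [cellError]
        ring
    _ = K * D * (2 * (R + D / T)) ^ n := by rw [mul_div_cancel₀ D (one_pos.trans_le hT).ne']
    _ ≤ cellError n K R D := by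
        rw [cellError]
        gcongr

lemma sum_primSum_dilate_le_latticeSum_dilate {n : ℕ} {f : (Fin n → ℝ) → ℝ≥0∞} (hf0 : f 0 = 0)
    (T : ℝ≥0) (D : ℕ) (Λ : LatticeSpace n) :
    ∑ k ∈ Finset.range D, primSum (dilate (T * ((k : ℝ≥0) + 1)⁻¹) f) Λ ≤
      latticeSum (dilate T f) Λ := by
  rw [latticeSum_dilate_eq_tsum_primSum hf0,
    tsum_pnat_eq_tsum_succ (f := fun k : ℕ => primSum (dilate (T / k) f) Λ)]
  refine le_of_eq_of_le ?_ (ENNReal.sum_le_tsum (Finset.range D))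
  simp only [div_eq_mul_inv, Nat.cast_add, Nat.cast_one]

lemma sum_lintegral_pairSum_dilate_le (hf : IsBump K r R f) (hT : 1 ≤ T) (D : ℕ) :
    ∑ k ∈ Finset.range D, ∫⁻ Λ, pairSum (dilate (T * ((k : ℝ≥0) + 1)⁻¹) f) f Λ ∂μ ≤
      T ^ 2 * (zetaSum 2 * siegelMean f ^ 2) +
        T * (cellError 2 K R (2 * R + r⁻¹) * siegelMean f) := by
  have hmeas := measurable_primSum (n := 2) hf.measurable
  have hdil : ∀ k : ℕ, Measurable (primSum (dilate (T * ((k : ℝ≥0) + 1)⁻¹) f)) := fun k =>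
    measurable_primSum (hf.dilate (by positivity)).measurable
  have hT0 : 0 < T := one_pos.trans_le hT
  calc _ ≤ ∑ k ∈ Finset.range D,
        ∫⁻ Λ, primSum (dilate (T * ((k : ℝ≥0) + 1)⁻¹) f) Λ * primSum f Λ ∂μ :=
        Finset.sum_le_sum fun k _ => lintegral_mono (pairSum_le _ _)
    _ = ∫⁻ Λ, (∑ k ∈ Finset.range D, primSum (dilate (T * ((k : ℝ≥0) + 1)⁻¹) f) Λ) *
        primSum f Λ ∂μ := by
      simp only [Finset.sum_mul]
      exact (lintegral_finsetSum _ fun k _ => (hdil k).mul hmeas).symm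
    _ ≤ ∫⁻ Λ, (T ^ 2 * (∫⁻ x, f x) + T * cellError 2 K R (2 * R + r⁻¹)) * primSum f Λ ∂μ := by
      refine lintegral_mono fun Λ => ?_
      by_cases h : primSum f Λ = 0
      · simp [h]
      gcongr
      refine (sum_primSum_dilate_le_latticeSum_dilate hf.map_zero T D Λ).trans ?_
      refine (latticeSum_dilate_le hf (hasCell_of_primSum_ne_zero hf h) hT0).trans ?_
      rw [mul_add, sq, mul_assoc _ _ (cellError _ _ _ _ : ℝ≥0∞),
        ← ENNReal.coe_mul T (cellError _ _ _ _)]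
      gcongr
      exact mul_cellError_div_le hT
    _ = (T ^ 2 * (∫⁻ x, f x) + T * cellError 2 K R (2 * R + r⁻¹)) * siegelMean f := by
      rw [lintegral_const_mul _ hmeas, lintegral_primSum hf]
    _ = _ := by
      rw [← zetaSum_mul_siegelMean le_rfl f]
      ring

theorem lintegral_pairSum_le (hf : IsBump K r R f) :
    ∫⁻ Λ, pairSum f f Λ ∂μ ≤ siegelMean f ^ 2 + 2 * siegelMean f := by
  have ha := siegelMean_ne_top hf
  have htwo := le_of_forall_sum_le (N := 2 * R ^ 2 + 1) (by positivity) (by finiteness)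
    (by finiteness)
    (fun T hT => sq_mul_add_le_lintegral_pairSum_dilate hf (lt_of_lt_of_le (lt_add_one _) hT))
    (fun T hT => sum_lintegral_pairSum_dilate_le (μ := μ) hf (le_trans le_add_self hT))
  refine (ENNReal.mul_le_mul_iff_right two_ne_zero ENNReal.ofNat_ne_top).1 (htwo.trans_eq ?_)
  ring

lemma lintegral_primSum_sq_le (hf : IsBump K r R f) :
    ∫⁻ Λ, primSum f Λ ^ 2 ∂μ ≤ siegelMean f ^ 2 + 4 * siegelMean f :=
  calc ∫⁻ Λ, primSum f Λ ^ 2 ∂μ ≤ ∫⁻ Λ, (pairSum f f Λ + 2 * primSum f Λ) ∂μ :=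
        lintegral_mono fun Λ => (sq (primSum f Λ)).trans_le (primSum_mul_primSum_le hf.le_one Λ)
    _ = ∫⁻ Λ, pairSum f f Λ ∂μ + 2 * siegelMean f := by
        have hmeas := measurable_primSum (n := 2) hf.measurable
        rw [lintegral_add_right _ (hmeas.const_mul 2), lintegral_const_mul _ hmeas,
          lintegral_primSum hf]
    _ ≤ siegelMean f ^ 2 + 2 * siegelMean f + 2 * siegelMean f := by
        gcongr
        exact lintegral_pairSum_le hf
    _ = _ := by ring

theorem measure_primSum_eq_zero_le_of_eq_two (hf : IsBump K r R f) :
    μ {Λ | primSum f Λ = 0} ≤ 4 / siegelMean f := by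
  have hmeas := measurable_primSum (n := 2) hf.measurable
  have hA : MeasurableSet {Λ | primSum f Λ = 0} := hmeas (measurableSet_singleton 0)
  have ha := siegelMean_ne_top hf
  set a := siegelMean f
  rcases eq_or_ne a 0 with ha0 | ha0
  · simp [ha0, ENNReal.div_zero]
  have hpoint : ∀ Λ, 2 * a * primSum f Λ + a ^ 2 * {Λ | primSum f Λ = 0}.indicator 1 Λ ≤
      primSum f Λ ^ 2 + a ^ 2 := by
    intro Λ
    by_cases h : primSum f Λ = 0
    · simp [h]
    · simpa [h, mul_right_comm 2 a, add_comm] using two_mul_mul_le_add_sq (primSum f Λ) a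
  have hmean := lintegral_mono (μ := μ) hpoint
  rw [lintegral_add_left (hmeas.const_mul _), lintegral_const_mul _ hmeas,
    lintegral_const_mul _ (measurable_one.indicator hA), lintegral_indicator_one hA,
    lintegral_add_right _ measurable_const, lintegral_const, measure_univ, mul_one,
    lintegral_primSum hf] at hmean
  rw [ENNReal.le_div_iff_mul_le (.inl ha0) (.inl ha), ← ENNReal.mul_le_mul_iff_right ha0 ha,
    ← ENNReal.add_le_add_iff_left (a := 2 * a ^ 2) (by finiteness)]
  calc 2 * a ^ 2 + a * (μ {Λ | primSum f Λ = 0} * a)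
      = 2 * a * a + a ^ 2 * μ {Λ | primSum f Λ = 0} := by ring
    _ ≤ ∫⁻ Λ, primSum f Λ ^ 2 ∂μ + a ^ 2 := hmean
    _ ≤ a ^ 2 + 4 * a + a ^ 2 := by
      gcongr
      exact lintegral_primSum_sq_le hf
    _ = 2 * a ^ 2 + a * 4 := by ring

end SecondMoment

/-! ### Lattices avoiding a set -/

section Avoidance

variable {n : ℕ} {C : Set (Fin n → ℝ)}

lemma isBump_thickenedIndicator {δ : ℝ} (hδ : 0 < δ) {r R : ℝ≥0} (hr : 0 < r)
    (hC : ∀ x ∈ Metric.thickening δ C, r ≤ ‖x‖₊ ∧ ‖x‖₊ ≤ R) :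
    IsBump δ.toNNReal⁻¹ r R fun x => (thickenedIndicator hδ C x : ℝ≥0∞) := by
  have hmem : ∀ {x}, (thickenedIndicator hδ C x : ℝ≥0∞) ≠ 0 → x ∈ Metric.thickening δ C :=
    fun hx => not_imp_comm.1 (thickenedIndicator_zero hδ C) (by simpa using hx)
  refine ⟨hr, fun x y => ?_, fun x => ?_, fun hx => (hC _ (hmem hx)).1,
    fun hx => (hC _ (hmem hx)).2⟩
  · refine le_trans ?_ (add_le_add_right (lipschitzWith_thickenedIndicator hδ C x y) _)
    rw [edist_nndist]
    exact_mod_cast NNReal.le_add_nndist _ _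
  · exact_mod_cast thickenedIndicator_le_one hδ C x

lemma exists_forall_mem_thickening_le_nnnorm (hC : IsCompact C) (h0 : 0 ∉ C) :
    ∃ r R : ℝ≥0, 0 < r ∧ ∀ x ∈ Metric.thickening (r : ℝ) C, r ≤ ‖x‖₊ ∧ ‖x‖₊ ≤ R := by
  obtain ⟨δ, hδ, hball⟩ := Metric.isOpen_iff.1 hC.isClosed.isOpen_compl 0 h0
  obtain ⟨R, hR⟩ := hC.isBounded.exists_norm_le
  refine ⟨⟨δ / 2, by positivity⟩, (R + δ / 2).toNNReal, half_pos hδ, fun x hx => ?_⟩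
  obtain ⟨y, hy, hxy⟩ := Metric.mem_thickening_iff.1 hx
  have hxy' : ‖x - y‖ < δ / 2 := by rwa [← dist_eq_norm]
  have hδy : δ ≤ ‖y‖ := by
    by_contra! h
    exact hball (mem_ball_zero_iff.2 h) hy
  constructor
  · change δ / 2 ≤ ‖x‖
    linarith [norm_le_norm_add_norm_sub x y]
  · rw [← NNReal.coe_le_coe, coe_nnnorm]
    refine le_trans ?_ (Real.le_coe_toNNReal _)
    linarith [norm_le_norm_add_norm_sub' x y, hR y hy]

lemma exists_disjoint_thickening (hC : IsCompact C) (h0 : 0 ∉ C) {Λ : LatticeSpace n}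
    (hΛ : ¬ Intersects n Λ C) :
    ∃ δ > 0, Disjoint (Metric.thickening δ C) (latticeVectors Λ : Set (Fin n → ℝ)) := by
  have hsub : C ⊆ (latticeVectors Λ : Set (Fin n → ℝ))ᶜ := fun v hvC hv =>
    hΛ (intersects_iff.2 ⟨v, hv, ne_of_mem_of_not_mem hvC h0, hvC⟩)
  obtain ⟨δ, hδ, h⟩ :=
    hC.exists_thickening_subset_open AddSubgroup.isClosed_of_discrete.isOpen_compl hsub
  exact ⟨δ, hδ, Set.disjoint_left.2 h⟩

variable {μ : Measure (LatticeSpace n)} [IsProbabilityMeasure μ]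
  [SMulInvariantMeasure (SLR n) (LatticeSpace n) μ]

theorem measure_primSum_eq_zero_le (hn : 2 ≤ n) {K r R : ℝ≥0} {f : (Fin n → ℝ) → ℝ≥0∞}
    (hf : IsBump K r R f) : μ {Λ | primSum f Λ = 0} ≤ 4 * zetaSum n / ∫⁻ x, f x := by
  have hle : μ {Λ | primSum f Λ = 0} ≤ 4 / siegelMean f := by
    obtain rfl | hn' := hn.eq_or_lt
    · exact measure_primSum_eq_zero_le_of_eq_two hf
    · refine (measure_primSum_eq_zero_le_of_three_le hf hn').trans ?_
      gcongr
      norm_num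
  rwa [siegelMean, ENNReal.div_eq_inv_mul, ENNReal.inv_div (.inl (zetaSum_ne_top hn))
    (.inl (zetaSum_ne_zero n)), mul_comm, ← mul_div_assoc] at hle

lemma measure_disjoint_thickening_le (hn : 2 ≤ n) (hC : IsClosed C) {δ : ℝ} (hδ : 0 < δ)
    {r R : ℝ≥0} (hr : 0 < r) (hnorm : ∀ x ∈ Metric.thickening δ C, r ≤ ‖x‖₊ ∧ ‖x‖₊ ≤ R) :
    μ {Λ | Disjoint (Metric.thickening δ C) (latticeVectors Λ : Set (Fin n → ℝ))} ≤
      4 * zetaSum n / volume C := by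
  have hsub : {Λ | Disjoint (Metric.thickening δ C) (latticeVectors Λ : Set (Fin n → ℝ))} ⊆
      {Λ | primSum (fun x => (thickenedIndicator hδ C x : ℝ≥0∞)) Λ = 0} := fun Λ hΛ =>
    ENNReal.tsum_eq_zero.2 fun v => ENNReal.coe_eq_zero.2 <|
      thickenedIndicator_zero hδ C (Set.disjoint_right.1 hΛ v.2.1)
  have hvol : volume C ≤ ∫⁻ x, thickenedIndicator hδ C x :=
    measure_le_lintegral_thickenedIndicator volume hC.measurableSet hδ
  exact (measure_mono hsub).trans
    ((measure_primSum_eq_zero_le hn (isBump_thickenedIndicator hδ hr hnorm)).trans (by gcongr))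

theorem measure_not_intersects_le (hn : 2 ≤ n) (hC : IsCompact C) (h0 : 0 ∉ C) :
    μ {Λ | ¬ Intersects n Λ C} ≤ 4 * zetaSum n / volume C := by
  obtain ⟨r, R, hr, hnorm⟩ := exists_forall_mem_thickening_le_nnnorm hC h0
  let δ : ℕ → ℝ := fun j => r / (j + 1)
  have hanti : Antitone δ := fun i j hij => by
    simp only [δ]
    gcongr
  have hδr : ∀ j, δ j ≤ r := fun j => (hanti j.zero_le).trans_eq (by simp [δ])
  let G : ℕ → Set (LatticeSpace n) := fun j =>
    {Λ | Disjoint (Metric.thickening (δ j) C) (latticeVectors Λ : Set (Fin n → ℝ))}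
  have hmono : Monotone G := fun i j hij _ hΛ =>
    hΛ.mono_left (Metric.thickening_mono (hanti hij) C)
  have hsub : {Λ | ¬ Intersects n Λ C} ⊆ ⋃ j, G j := fun Λ hΛ => by
    obtain ⟨ε, hε, hdisj⟩ := exists_disjoint_thickening hC h0 hΛ
    obtain ⟨j, hj⟩ := exists_nat_gt (r / ε)
    refine Set.mem_iUnion.2 ⟨j, hdisj.mono_left (Metric.thickening_mono ?_ C)⟩
    rw [div_lt_iff₀ hε] at hj
    rw [div_le_iff₀ j.cast_add_one_pos]
    linarith
  calc μ {Λ | ¬ Intersects n Λ C} ≤ μ (⋃ j, G j) := measure_mono hsub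
    _ = ⨆ j, μ (G j) := hmono.measure_iUnion
    _ ≤ 4 * zetaSum n / volume C := iSup_le fun j =>
      measure_disjoint_thickening_le hn hC.isClosed (div_pos hr j.cast_add_one_pos) hr
        fun x hx => hnorm x (Metric.thickening_mono (hδr j) C hx)

end Avoidance

/-- If `m(A_k) → ∞` then the measure of the set of unimodular lattices missing `A_k`
tends to `0`. -/
theorem measure_avoiding_tendsto_zero (n : ℕ) (hn : 2 ≤ n)
    (μ : Measure (LatticeSpace n)) [IsProbabilityMeasure μ]
    (hinv : ∀ (g : SLR n) (s : Set (LatticeSpace n)), μ ((fun x => g • x) ⁻¹' s) = μ s)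
    (A : ℕ → Set (Fin n → ℝ)) (hA : ∀ k, MeasurableSet (A k))
    (hvol : Tendsto (fun k => volume (A k)) atTop (nhds ⊤)) :
    Tendsto (fun k => μ {Λ : LatticeSpace n | ¬ Intersects n Λ (A k)}) atTop (nhds 0) := by
  have : SMulInvariantMeasure (SLR n) (LatticeSpace n) μ := ⟨fun g s _ => hinv g s⟩
  have : Nonempty (Fin n) := ⟨⟨0, by lia⟩⟩
  refine ENNReal.tendsto_nhds_zero.2 fun ε hε => ?_
  obtain rfl | hε' := eq_or_ne ε ⊤
  · exact .of_forall fun _ => le_top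
  have hc : 4 * zetaSum n / ε < ⊤ :=
    ENNReal.div_lt_top (ENNReal.mul_ne_top (by simp) (zetaSum_ne_top hn)) hε.ne'
  filter_upwards [hvol.eventually_const_lt hc] with k hk
  rw [← measure_sdiff_null (measure_singleton (0 : Fin n → ℝ))] at hk
  obtain ⟨C, hCA, hC, hCvol⟩ := ((hA k).diff (measurableSet_singleton 0)).exists_lt_isCompact hk
  have hmiss : {Λ | ¬ Intersects n Λ (A k)} ⊆ {Λ | ¬ Intersects n Λ C} := fun Λ hΛ hΛC =>
    hΛ fun g hg => (hΛC g hg).imp fun m hm => ⟨hm.1, (hCA hm.2).1⟩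
  calc μ {Λ | ¬ Intersects n Λ (A k)} ≤ μ {Λ | ¬ Intersects n Λ C} := measure_mono hmiss
    _ ≤ 4 * zetaSum n / volume C := measure_not_intersects_le hn hC fun h => (hCA h).2 rfl
    _ ≤ ε := ENNReal.div_le_of_le_mul'
      ((ENNReal.div_le_iff_le_mul (.inl hε.ne') (.inl hε')).1 hCvol.le)
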